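/- arXiv:1905.13435 — 7 statements merged into one kernel-verified Lean document; each statement's English description precedes it below -/
import Mathlib

section
/- For any measurable space F and any two probability measures Q and U on F, the Kullback–Leibler divergence satisfies the Donsker–Varadhan variational formula: D_KL(Q‖U) = sup over all bounded measurable functions X : F → ℝ of ( ∫ X dQ − log ∫ e^X dU ). In particular, for every bounded measurable X one has ∫ X dQ ≤ D_KL(Q‖U) + log ∫ e^X dU, and this bound cannot be uniformly improved. -/
open MeasureTheory Real
open scoped Classical

/-- The Kullback--Leibler divergence between two measures, valued in the extended reals:
`∫ log (dQ/dU) dQ` when `Q ≪ U` and the log-likelihood ratio is `Q`-integrable,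
and `+∞` otherwise. -/
noncomputable def klDiv {F : Type*} [MeasurableSpace F] (Q U : Measure F) : EReal :=
  if Q ≪ U ∧ Integrable (llr Q U) Q then ((∫ f, llr Q U f ∂Q : ℝ) : EReal) else ⊤

/-! Gibbs' inequality for `Q` against the tilted measure `e^X U / ∫ e^X dU` bounds the functional by
the divergence. Conversely, put `p = dQ/dU`. For every bounded `X`, since `log m ≤ m - 1`,
`∫ (p X + 1 - e^X) dU ≤ (∫ X dQ - log ∫ e^X dU) + U(F) - 1`. Pointwise, `p x + 1 - e^x` has supremum
`p log p + 1 - p` over `x`, approached when `x` is the logarithm of `p` truncated to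
`[e^{-r}, e^r]`. The truncated values are nonnegative, so Fatou's lemma bounds
`∫ (p log p + 1 - p) dU = D_KL(Q‖U) + U(F) - 1` with no integrability known in advance. -/

open Filter Set Topology
open InformationTheory (klFun klFun_apply klFun_nonneg)

/-- The functional maximized in the Donsker–Varadhan formula. It has its usual meaning only when
`X` is `Q`-integrable, `e^X` is `U`-integrable and `U ≠ 0`. -/
noncomputable def dvFunctional {F : Type*} [MeasurableSpace F] (Q U : Measure F) (X : F → ℝ) : ℝ :=
  (∫ f, X f ∂Q) - log (∫ f, exp (X f) ∂U)

/-- The bounded measurable real functions on `F`, over which the supremum is taken. -/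
def boundedMeasurable (F : Type*) [MeasurableSpace F] : Set (F → ℝ) :=
  {X | Measurable X ∧ ∃ C : ℝ, ∀ f, |X f| ≤ C}

/-- The truncation of `t` to the interval `[e^{-r}, e^r]`, for `r ≥ 0`. -/
noncomputable def expClamp (r t : ℝ) : ℝ :=
  max (exp (-r)) (min (exp r) t)

/-- The value at `x = log (expClamp r t)` of `t * x + 1 - e^x`, whose supremum over `x` is
`klFun t = t log t + 1 - t`. -/
noncomputable def truncKlFun (r t : ℝ) : ℝ :=
  t * log (expClamp r t) + 1 - expClamp r t

section Truncation

variable {r t : ℝ}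

lemma expClamp_pos (r t : ℝ) : 0 < expClamp r t :=
  lt_max_of_lt_left (exp_pos _)

lemma measurable_expClamp (r : ℝ) : Measurable (expClamp r) :=
  measurable_const.max (measurable_const.min measurable_id)

lemma abs_log_expClamp_le (hr : 0 ≤ r) (t : ℝ) : |log (expClamp r t)| ≤ r := by
  rw [abs_le, le_log_iff_exp_le (expClamp_pos r t), log_le_iff_le_exp (expClamp_pos r t)]
  exact ⟨le_max_left _ _, max_le (exp_le_exp.2 (by linarith)) (min_le_left _ _)⟩

lemma tendsto_expClamp (ht : 0 ≤ t) : Tendsto (fun r ↦ expClamp r t) atTop (𝓝 t) := by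
  have upper : Tendsto (fun r ↦ min (exp r) t) atTop (𝓝 t) := by
    refine tendsto_const_nhds.congr' ?_
    filter_upwards [tendsto_exp_atTop.eventually_ge_atTop t] with r hr
    exact (min_eq_right hr).symm
  simpa only [expClamp, max_eq_right ht] using tendsto_exp_neg_atTop_nhds_zero.max upper

lemma measurable_truncKlFun (r : ℝ) : Measurable (truncKlFun r) :=
  ((measurable_id.mul (measurable_expClamp r).log).add_const 1).sub (measurable_expClamp r)

lemma sub_expClamp_mul_log_expClamp_nonneg (hr : 0 ≤ r) (t : ℝ) :
    0 ≤ (t - expClamp r t) * log (expClamp r t) := by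
  have lower_le_one : exp (-r) ≤ 1 := exp_le_one_iff.2 (by linarith)
  have one_le_upper : 1 ≤ exp r := one_le_exp hr
  rcases le_total t 1 with ht | ht
  · have le_clamp : t ≤ expClamp r t := le_max_of_le_right (le_min (ht.trans one_le_upper) le_rfl)
    have clamp_le_one : expClamp r t ≤ 1 := max_le lower_le_one (min_le_of_right_le ht)
    exact mul_nonneg_of_nonpos_of_nonpos (sub_nonpos.2 le_clamp)
      (log_nonpos (expClamp_pos r t).le clamp_le_one)
  · have clamp_le : expClamp r t ≤ t := max_le (lower_le_one.trans ht) (min_le_right _ _)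
    have one_le_clamp : 1 ≤ expClamp r t := le_max_of_le_right (le_min one_le_upper ht)
    exact mul_nonneg (sub_nonneg.2 clamp_le) (log_nonneg one_le_clamp)

lemma truncKlFun_nonneg (hr : 0 ≤ r) (t : ℝ) : 0 ≤ truncKlFun r t := by
  calc 0 ≤ klFun (expClamp r t) + (t - expClamp r t) * log (expClamp r t) :=
        add_nonneg (klFun_nonneg (expClamp_pos r t).le)
          (sub_expClamp_mul_log_expClamp_nonneg hr t)
    _ = truncKlFun r t := by rw [klFun_apply, truncKlFun]; ring

lemma tendsto_truncKlFun (ht : 0 ≤ t) : Tendsto (fun r ↦ truncKlFun r t) atTop (𝓝 (klFun t)) := by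
  have clamp_tendsto := tendsto_expClamp ht
  have mul_log_tendsto :
      Tendsto (fun r ↦ t * log (expClamp r t)) atTop (𝓝 (t * log t)) := by
    rcases ht.eq_or_lt with rfl | ht_pos
    · simp only [zero_mul, tendsto_const_nhds]
    · exact (clamp_tendsto.log ht_pos.ne').const_mul t
  exact (mul_log_tendsto.add_const 1).sub clamp_tendsto

end Truncation

section BoundedMeasurable

variable {F : Type*} [MeasurableSpace F] {X : F → ℝ}

lemma integrable_of_mem_boundedMeasurable (hX : X ∈ boundedMeasurable F) (μ : Measure F)
    [IsFiniteMeasure μ] : Integrable X μ := by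
  obtain ⟨X_meas, C, hC⟩ := hX
  exact .of_bound X_meas.aestronglyMeasurable C (.of_forall hC)

lemma integrable_exp_of_mem_boundedMeasurable (hX : X ∈ boundedMeasurable F) (μ : Measure F)
    [IsFiniteMeasure μ] : Integrable (fun f ↦ exp (X f)) μ := by
  obtain ⟨X_meas, C, hC⟩ := hX
  simpa only [one_mul] using ProbabilityTheory.integrable_exp_mul_of_mem_Icc (t := 1)
    X_meas.aemeasurable (.of_forall fun f ↦ abs_le.1 (hC f))

lemma log_expClamp_comp_mem_boundedMeasurable {p : F → ℝ} (hp : Measurable p) {r : ℝ}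
    (hr : 0 ≤ r) : (fun f ↦ log (expClamp r (p f))) ∈ boundedMeasurable F :=
  ⟨((measurable_expClamp r).comp hp).log, r, fun f ↦ abs_log_expClamp_le hr (p f)⟩

end BoundedMeasurable

section UpperBound

variable {F : Type*} [MeasurableSpace F] {Q U : Measure F} [IsProbabilityMeasure Q] [SigmaFinite U]
  {X : F → ℝ}

lemma dvFunctional_le_integral_llr (hQU : Q ≪ U) (h_llr : Integrable (llr Q U) Q)
    (hXQ : Integrable X Q) (hXU : Integrable (fun f ↦ exp (X f)) U) :
    dvFunctional Q U X ≤ ∫ f, llr Q U f ∂Q := by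
  have : NeZero U :=
    ⟨fun hU ↦ NeZero.ne Q (Measure.absolutelyContinuous_zero_iff.1 (hU ▸ hQU))⟩
  have : IsProbabilityMeasure (U.tilted X) := isProbabilityMeasure_tilted hXU
  have gibbs := InformationTheory.integral_llr_add_sub_measure_univ_nonneg
    (hQU.trans (absolutelyContinuous_tilted hXU)) (integrable_llr_tilted_right hQU hXQ h_llr hXU)
  rw [integral_llr_tilted_right hQU hXQ hXU h_llr, probReal_univ, probReal_univ] at gibbs
  rw [dvFunctional]
  linarith

lemma dvFunctional_le_klDiv (hXQ : Integrable X Q) (hXU : Integrable (fun f ↦ exp (X f)) U) :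
    (dvFunctional Q U X : EReal) ≤ klDiv Q U := by
  rw [klDiv]
  split_ifs with h
  · exact EReal.coe_le_coe_iff.2 (dvFunctional_le_integral_llr h.1 h.2 hXQ hXU)
  · exact le_top

end UpperBound

section LowerBound

variable {F : Type*} [MeasurableSpace F] {Q U : Measure F} {s : ℝ}

lemma dvFunctional_indicator_const_of_measure_eq_zero (Q : Measure F) {A : Set F}
    (hA : MeasurableSet A) (hUA : U A = 0) (c : ℝ) :
    dvFunctional Q U (A.indicator fun _ ↦ c) = Q.real A * c - log (U.real univ) := by
  have exp_ae_eq_one : (fun f ↦ exp (A.indicator (fun _ ↦ c) f)) =ᵐ[U] fun _ ↦ 1 := by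
    filter_upwards [measure_eq_zero_iff_ae_notMem.1 hUA] with f hf
    rw [indicator_of_notMem hf, exp_zero]
  rw [dvFunctional, integral_congr_ae exp_ae_eq_one, integral_indicator_const c hA,
    integral_const, smul_eq_mul, smul_eq_mul, mul_one]

lemma absolutelyContinuous_of_forall_dvFunctional_le [IsFiniteMeasure Q]
    (h : ∀ X ∈ boundedMeasurable F, dvFunctional Q U X ≤ s) : Q ≪ U := by
  refine Measure.AbsolutelyContinuous.mk fun A hA hUA ↦ ?_
  by_contra hQA
  have QA_pos : 0 < Q.real A := ENNReal.toReal_pos hQA (measure_ne_top Q A)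
  obtain ⟨c, hc⟩ := exists_gt ((s + log (U.real univ)) / Q.real A)
  have indicator_mem : (A.indicator fun _ ↦ c) ∈ boundedMeasurable F :=
    ⟨measurable_const.indicator hA, |c|, fun _ ↦ norm_indicator_le_norm_self (fun _ ↦ c) _⟩
  have dv_le := h _ indicator_mem
  rw [dvFunctional_indicator_const_of_measure_eq_zero Q hA hUA] at dv_le
  rw [div_lt_iff₀' QA_pos] at hc
  linarith

section YoungIntegrand

variable [SigmaFinite Q] [IsFiniteMeasure U] {X : F → ℝ}

lemma integrable_rnDeriv_mul_add_one_sub_exp (hQU : Q ≪ U) (hXQ : Integrable X Q)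
    (hXU : Integrable (fun f ↦ exp (X f)) U) :
    Integrable (fun f ↦ (Q.rnDeriv U f).toReal * X f + 1 - exp (X f)) U :=
  (((integrable_rnDeriv_smul_iff hQU).2 hXQ).add (integrable_const 1)).sub hXU

lemma integral_rnDeriv_mul_add_one_sub_exp_le [NeZero U] (hQU : Q ≪ U) (hXQ : Integrable X Q)
    (hXU : Integrable (fun f ↦ exp (X f)) U) :
    ∫ f, ((Q.rnDeriv U f).toReal * X f + 1 - exp (X f)) ∂U
      ≤ dvFunctional Q U X + U.real univ - 1 := by
  have h_mul : Integrable (fun f ↦ (Q.rnDeriv U f).toReal * X f) U :=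
    (integrable_rnDeriv_smul_iff hQU).2 hXQ
  have log_le := log_le_sub_one_of_pos (integral_exp_pos hXU)
  calc ∫ f, ((Q.rnDeriv U f).toReal * X f + 1 - exp (X f)) ∂U
      = ∫ f, X f ∂Q + U.real univ - ∫ f, exp (X f) ∂U := by
        rw [integral_sub (by fun_prop) hXU,
          integral_add h_mul (integrable_const 1), integral_toReal_rnDeriv_mul hQU,
          integral_const, smul_eq_mul, mul_one]
    _ ≤ dvFunctional Q U X + U.real univ - 1 := by rw [dvFunctional]; linarith

end YoungIntegrand

variable [IsFiniteMeasure Q] [IsFiniteMeasure U] [NeZero U]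

lemma lintegral_truncKlFun_rnDeriv_le (hQU : Q ≪ U)
    (h : ∀ X ∈ boundedMeasurable F, dvFunctional Q U X ≤ s) {r : ℝ} (hr : 0 ≤ r) :
    ∫⁻ f, ENNReal.ofReal (truncKlFun r (Q.rnDeriv U f).toReal) ∂U
      ≤ ENNReal.ofReal (s + U.real univ - 1) := by
  set X : F → ℝ := fun f ↦ log (expClamp r (Q.rnDeriv U f).toReal)
  have hX : X ∈ boundedMeasurable F :=
    log_expClamp_comp_mem_boundedMeasurable (Measure.measurable_rnDeriv Q U).ennreal_toReal hr
  have hXQ := integrable_of_mem_boundedMeasurable hX Q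
  have hXU := integrable_exp_of_mem_boundedMeasurable hX U
  have trunc_eq : ∀ f, truncKlFun r (Q.rnDeriv U f).toReal
      = (Q.rnDeriv U f).toReal * X f + 1 - exp (X f) := fun f ↦ by
    simp only [truncKlFun, X, exp_log (expClamp_pos _ _)]
  rw [← ofReal_integral_eq_lintegral_ofReal]
  · refine ENNReal.ofReal_le_ofReal ?_
    calc ∫ f, truncKlFun r (Q.rnDeriv U f).toReal ∂U
        = ∫ f, ((Q.rnDeriv U f).toReal * X f + 1 - exp (X f)) ∂U := by simp only [trunc_eq]
      _ ≤ dvFunctional Q U X + U.real univ - 1 :=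
        integral_rnDeriv_mul_add_one_sub_exp_le hQU hXQ hXU
      _ ≤ s + U.real univ - 1 := by gcongr; exact h X hX
  · simpa only [trunc_eq] using integrable_rnDeriv_mul_add_one_sub_exp hQU hXQ hXU
  · exact .of_forall fun f ↦ truncKlFun_nonneg hr _

lemma lintegral_klFun_rnDeriv_le (hQU : Q ≪ U)
    (h : ∀ X ∈ boundedMeasurable F, dvFunctional Q U X ≤ s) :
    ∫⁻ f, ENNReal.ofReal (klFun (Q.rnDeriv U f).toReal) ∂U
      ≤ ENNReal.ofReal (s + U.real univ - 1) := by
  have p_meas : Measurable fun f ↦ (Q.rnDeriv U f).toReal :=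
    (Measure.measurable_rnDeriv Q U).ennreal_toReal
  calc ∫⁻ f, ENNReal.ofReal (klFun (Q.rnDeriv U f).toReal) ∂U
      = ∫⁻ f, liminf (fun r ↦ ENNReal.ofReal (truncKlFun r (Q.rnDeriv U f).toReal)) atTop ∂U :=
        lintegral_congr fun f ↦
          (ENNReal.tendsto_ofReal (tendsto_truncKlFun ENNReal.toReal_nonneg)).liminf_eq.symm
    _ ≤ liminf (fun r ↦ ∫⁻ f, ENNReal.ofReal (truncKlFun r (Q.rnDeriv U f).toReal) ∂U) atTop :=
        lintegral_liminf_le fun r ↦ ((measurable_truncKlFun r).comp p_meas).ennreal_ofReal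
    _ ≤ ENNReal.ofReal (s + U.real univ - 1) := by
        refine liminf_le_of_frequently_le' (Eventually.frequently ?_)
        filter_upwards [eventually_ge_atTop 0] with r hr
        exact lintegral_truncKlFun_rnDeriv_le hQU h hr

end LowerBound

section KLDivLe

variable {F : Type*} [MeasurableSpace F] {Q U : Measure F} [IsProbabilityMeasure Q]
  [IsFiniteMeasure U] [NeZero U] {s : ℝ}

lemma klDiv_le_of_forall_dvFunctional_le
    (h : ∀ X ∈ boundedMeasurable F, dvFunctional Q U X ≤ s) : klDiv Q U ≤ s := by
  have hQU : Q ≪ U := absolutelyContinuous_of_forall_dvFunctional_le h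
  have kl_le : InformationTheory.klDiv Q U ≤ ENNReal.ofReal (s + U.real univ - 1) := by
    rw [InformationTheory.klDiv_eq_lintegral_klFun_of_ac hQU]
    exact lintegral_klFun_rnDeriv_le hQU h
  have h_llr : Integrable (llr Q U) Q :=
    (InformationTheory.klDiv_ne_top_iff.1 (ne_top_of_le_ne_top ENNReal.ofReal_ne_top kl_le)).2
  have bound_nonneg : 0 ≤ s + U.real univ - 1 := by
    have neg_log_le : -log (U.real univ) ≤ s := by
      simpa [dvFunctional] using h 0 ⟨measurable_const, 0, fun _ ↦ abs_zero.le⟩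
    linarith [log_le_sub_one_of_pos (measureReal_univ_pos (μ := U))]
  rw [InformationTheory.klDiv_of_ac_of_integrable hQU h_llr, probReal_univ (μ := Q),
    ENNReal.ofReal_le_ofReal_iff bound_nonneg] at kl_le
  rw [klDiv, if_pos ⟨hQU, h_llr⟩, EReal.coe_le_coe_iff]
  linarith

end KLDivLe

theorem donsker_varadhan_general {F : Type*} [MeasurableSpace F]
    (Q U : Measure F) [IsProbabilityMeasure Q] [IsFiniteMeasure U] [NeZero U] :
    (klDiv Q U = ⨆ X : boundedMeasurable F, (dvFunctional Q U X : EReal)) ∧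
    (∀ X : F → ℝ, Integrable X Q → Integrable (fun f ↦ exp (X f)) U →
      ((∫ f, X f ∂Q : ℝ) : EReal) ≤
        klDiv Q U + ((log (∫ f, exp (X f) ∂U) : ℝ) : EReal)) := by
  refine ⟨le_antisymm ?_ (iSup_le fun X ↦ ?_), fun X hXQ hXU ↦ ?_⟩
  · refine EReal.le_of_forall_lt_iff_le.1 fun s hs ↦ klDiv_le_of_forall_dvFunctional_le ?_
    intro X hX
    exact EReal.coe_le_coe_iff.1 (iSup_le_iff.1 hs.le ⟨X, hX⟩)
  · exact dvFunctional_le_klDiv (integrable_of_mem_boundedMeasurable X.2 Q)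
      (integrable_exp_of_mem_boundedMeasurable X.2 U)
  · rw [← EReal.sub_le_iff_le_add (by simp) (by simp), ← EReal.coe_sub]
    exact dvFunctional_le_klDiv hXQ hXU

/-- **Donsker--Varadhan variational formula.**  For probability measures `Q, U` on a
measurable space `F`, the KL divergence equals the supremum, over bounded measurable
`X : F → ℝ`, of `∫ X dQ − log ∫ e^X dU`; in particular every bounded measurable `X`
satisfies `∫ X dQ ≤ D_KL(Q‖U) + log ∫ e^X dU`. -/
theorem donsker_varadhan {F : Type*} [MeasurableSpace F]
    (Q U : Measure F) [IsProbabilityMeasure Q] [IsProbabilityMeasure U] :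
    (klDiv Q U =
      ⨆ X : {X : F → ℝ // Measurable X ∧ ∃ C : ℝ, ∀ f, |X f| ≤ C},
        (((∫ f, X.1 f ∂Q) - Real.log (∫ f, Real.exp (X.1 f) ∂U) : ℝ) : EReal)) ∧
    (∀ X : F → ℝ, Measurable X → (∃ C : ℝ, ∀ f, |X f| ≤ C) →
      ((∫ f, X f ∂Q : ℝ) : EReal) ≤
        klDiv Q U + ((Real.log (∫ f, Real.exp (X f) ∂U) : ℝ) : EReal)) :=
  ⟨(donsker_varadhan_general Q U).1, fun X hX hC ↦ (donsker_varadhan_general Q U).2 X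
    (integrable_of_mem_boundedMeasurable ⟨hX, hC⟩ Q)
    (integrable_exp_of_mem_boundedMeasurable ⟨hX, hC⟩ U)⟩
end

section
/- (Rademacher centrality.) Let P be a probability measure on a measurable space Z and let X : Z → ℝ be measurable with ∫ X dP = 0 and ∫ X² dP < ∞. Then ∫_Z exp( X(z) − ( X(z)² + ∫ X² dP ) / 2 ) dP(z) ≤ 1. -/
open MeasureTheory Real

/-!
Taking reciprocals in `1 - y ≤ exp (-y)` at `y = x - x² / 2` and using
`(1 + x + x² / 2) * (1 - x + x² / 2) = 1 + x⁴ / 4 ≥ 1` gives `exp (x - x² / 2) ≤ 1 + x + x² / 2`.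
The right side is quadratic, so integrating at `x = X` needs only second moments; the rest is
`1 + t ≤ exp t` at `t = E[X] + E[X²] / 2`.
-/

theorem exp_sub_sq_div_two_le (x : ℝ) : exp (x - x ^ 2 / 2) ≤ 1 + x + x ^ 2 / 2 := by
  have minus_pos : 0 < 1 - x + x ^ 2 / 2 := by nlinarith [sq_nonneg (x - 1)]
  have minus_le : 1 - x + x ^ 2 / 2 ≤ exp (-(x - x ^ 2 / 2)) := by
    linarith [one_sub_le_exp_neg (x - x ^ 2 / 2)]
  have factorization : (1 + x + x ^ 2 / 2) * (1 - x + x ^ 2 / 2) = 1 + x ^ 4 / 4 := by ring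
  calc exp (x - x ^ 2 / 2) = (exp (-(x - x ^ 2 / 2)))⁻¹ := by rw [exp_neg, inv_inv]
    _ ≤ (1 - x + x ^ 2 / 2)⁻¹ := inv_anti₀ minus_pos minus_le
    _ ≤ 1 + x + x ^ 2 / 2 := by
      rw [inv_le_iff_one_le_mul₀ minus_pos, factorization]
      exact le_add_of_nonneg_right (by positivity)

section

variable {Ω : Type*} [MeasurableSpace Ω] {μ : Measure Ω} {X : Ω → ℝ}

theorem integral_exp_sub_sq_div_two_le [IsFiniteMeasure μ] (hX : MemLp X 2 μ) :
    ∫ ω, exp (X ω - X ω ^ 2 / 2) ∂μ ≤ μ.real Set.univ + ∫ ω, X ω ∂μ + (∫ ω, X ω ^ 2 ∂μ) / 2 := by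
  have int_X : Integrable X μ := hX.integrable one_le_two
  have int_one_add : Integrable (fun ω ↦ 1 + X ω) μ := (integrable_const 1).add int_X
  have int_sq : Integrable (fun ω ↦ X ω ^ 2 / 2) μ := hX.integrable_sq.div_const 2
  calc ∫ ω, exp (X ω - X ω ^ 2 / 2) ∂μ
      ≤ ∫ ω, (1 + X ω + X ω ^ 2 / 2) ∂μ :=
        integral_mono_of_nonneg (.of_forall fun _ ↦ exp_nonneg _) (int_one_add.add int_sq)
          (.of_forall fun ω ↦ exp_sub_sq_div_two_le (X ω))
    _ = μ.real Set.univ + ∫ ω, X ω ∂μ + (∫ ω, X ω ^ 2 ∂μ) / 2 := by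
      rw [integral_add int_one_add int_sq, integral_add (integrable_const 1) int_X,
        integral_div, integral_const, smul_eq_mul, mul_one]

theorem rademacher_centrality_general [IsProbabilityMeasure μ] (hX : MemLp X 2 μ) :
    ∫ ω, exp (X ω - (X ω ^ 2 + ∫ ω', X ω' ^ 2 ∂μ) / 2) ∂μ ≤ exp (∫ ω, X ω ∂μ) := by
  set m := ∫ ω, X ω ∂μ
  set v := ∫ ω, X ω ^ 2 ∂μ
  have moment_bound : ∫ ω, exp (X ω - X ω ^ 2 / 2) ∂μ ≤ exp (m + v / 2) :=
    calc ∫ ω, exp (X ω - X ω ^ 2 / 2) ∂μ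
        ≤ 1 + m + v / 2 := by simpa only [probReal_univ] using integral_exp_sub_sq_div_two_le hX
      _ ≤ exp (m + v / 2) := by linarith [add_one_le_exp (m + v / 2)]
  calc ∫ ω, exp (X ω - (X ω ^ 2 + v) / 2) ∂μ
      = (∫ ω, exp (X ω - X ω ^ 2 / 2) ∂μ) * exp (-(v / 2)) := by
        simp only [← integral_mul_const, ← exp_add, ← sub_eq_add_neg, add_div, sub_add_eq_sub_sub]
    _ ≤ exp (m + v / 2) * exp (-(v / 2)) := by gcongr
    _ = exp m := by rw [← exp_add, add_neg_cancel_right]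

end

/-- **Rademacher centrality.**  If `X` is centered and square-integrable under the
probability measure `P`, then `∫ exp(X − (X² + E[X²])/2) dP ≤ 1`; that is, `X` is
`(X² + E[X²])/2`-central. -/
theorem rademacher_centrality
    {Z : Type*} [MeasurableSpace Z] (P : Measure Z) [IsProbabilityMeasure P]
    (X : Z → ℝ) (hXmeas : Measurable X)
    (hcentered : ∫ z, X z ∂P = 0)
    (hL2 : Integrable (fun z => (X z)^2) P) :
    ∫ z, Real.exp (X z - ((X z)^2 + ∫ z', (X z')^2 ∂P) / 2) ∂P ≤ 1 := by
  have hX : MemLp X 2 P := (memLp_two_iff_integrable_sq hXmeas.aestronglyMeasurable).2 hL2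
  simpa only [hcentered, exp_zero] using rademacher_centrality_general hX
end

section
/- Let N = N(λ̄, ρ²) be the Gaussian probability measure on ℝ with mean λ̄ ∈ ℝ and variance ρ² > 0, and let 𝒰₁ be the standard Cauchy distribution on ℝ, with Lebesgue density t ↦ 1/(π(1+t²)). Then D_KL(N‖𝒰₁) ≤ log( π(1 + λ̄² + ρ²) ) − (1/2)·log(2π e ρ²), and consequently D_KL(N‖𝒰₁) ≤ λ̄² + log( ρ + 1/ρ ). -/
open MeasureTheory Real
open scoped Classical

/-- The standard Cauchy distribution on `ℝ`, with Lebesgue density `t ↦ 1/(π(1+t²))`. -/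
noncomputable def stdCauchy : Measure ℝ :=
  volume.withDensity fun t => ENNReal.ofReal (1 / (Real.pi * (1 + t^2)))

/-!
For `Q ≪ vol`, the chain rule for log-likelihood ratios splits `D(Q‖𝒰₁)` into the negative entropy
`∫ log (dQ/dx) dQ` and the cross entropy `log π + ∫ log (1 + x²) dQ`. Jensen's inequality bounds the
latter by `log (π (1 + ∫ x² dQ))`, so only the entropy and the second moment of the Gaussian enter.
The second bound follows from the first because `log` is `1`-Lipschitz on `[1, ∞)` and `π ≤ 2e`.
-/

open ProbabilityTheory
open scoped NNReal ENNReal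

section LogLikelihood

variable {α : Type*} [MeasurableSpace α] {Q U : Measure α} [SigmaFinite Q] [SigmaFinite U]
  {f : α → ℝ≥0∞}

lemma llr_withDensity_right (hQU : Q ≪ U) (hf : AEMeasurable f U) (hf_ne_zero : ∀ᵐ x ∂U, f x ≠ 0)
    (hf_ne_top : ∀ᵐ x ∂U, f x ≠ ∞) :
    llr Q (U.withDensity f) =ᵐ[Q] fun x ↦ llr Q U x - log (f x).toReal := by
  filter_upwards [hQU.ae_le (Measure.rnDeriv_withDensity_right Q U hf hf_ne_zero hf_ne_top),
    hQU.ae_le hf_ne_zero, hQU.ae_le hf_ne_top, hQU.ae_le (Q.rnDeriv_ne_top U),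
    Measure.rnDeriv_pos hQU] with x hx hfx_zero hfx_top hQ_top hQ_pos
  have hf_toReal : (f x).toReal ≠ 0 := ENNReal.toReal_ne_zero.2 ⟨hfx_zero, hfx_top⟩
  have hQ_toReal : (Q.rnDeriv U x).toReal ≠ 0 := ENNReal.toReal_ne_zero.2 ⟨hQ_pos.ne', hQ_top⟩
  rw [llr, hx, ENNReal.toReal_mul, ENNReal.toReal_inv, log_mul (inv_ne_zero hf_toReal) hQ_toReal,
    log_inv, llr]
  ring

lemma klDiv_withDensity_right (hQU : Q ≪ U) (hf : AEMeasurable f U)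
    (hf_ne_zero : ∀ᵐ x ∂U, f x ≠ 0) (hf_ne_top : ∀ᵐ x ∂U, f x ≠ ∞)
    (hllr : Integrable (llr Q U) Q) (hlog : Integrable (fun x ↦ log (f x).toReal) Q) :
    klDiv Q (U.withDensity f) =
      ((∫ x, llr Q U x ∂Q - ∫ x, log (f x).toReal ∂Q : ℝ) : EReal) := by
  have hllr_eq := llr_withDensity_right hQU hf hf_ne_zero hf_ne_top
  have hac : Q ≪ U.withDensity f := hQU.trans (withDensity_absolutelyContinuous' hf hf_ne_zero)
  rw [klDiv, if_pos ⟨hac, (hllr.sub hlog).congr hllr_eq.symm⟩, integral_congr_ae hllr_eq,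
    integral_sub hllr hlog]

end LogLikelihood

section LogOneAdd

variable {α : Type*} [MeasurableSpace α] {μ : Measure α} {f : α → ℝ}

lemma integrable_log_one_add (hf : Integrable f μ) (hf_nonneg : 0 ≤ᵐ[μ] f) :
    Integrable (fun x ↦ log (1 + f x)) μ := by
  refine hf.mono' (hf.aemeasurable.const_add 1).log.aestronglyMeasurable ?_
  filter_upwards [hf_nonneg] with x (hx : 0 ≤ f x)
  rw [norm_of_nonneg (log_nonneg (by linarith))]
  linarith [log_le_sub_one_of_pos (show 0 < 1 + f x by linarith)]

lemma integral_log_one_add_le [IsProbabilityMeasure μ] (hf : Integrable f μ)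
    (hf_nonneg : 0 ≤ᵐ[μ] f) : ∫ x, log (1 + f x) ∂μ ≤ log (1 + ∫ x, f x ∂μ) := by
  have hpos : Set.Ici (1 : ℝ) ⊆ Set.Ioi 0 := Set.Ici_subset_Ioi.2 one_pos
  have hconcave : ConcaveOn ℝ (Set.Ici 1) log :=
    strictConcaveOn_log_Ioi.concaveOn.subset hpos (convex_Ici 1)
  have hcont : ContinuousOn log (Set.Ici 1) := continuousOn_log.mono fun x hx ↦ (hpos hx).ne'
  have hmem : ∀ᵐ x ∂μ, 1 + f x ∈ Set.Ici 1 := by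
    filter_upwards [hf_nonneg] with x hx using le_add_of_nonneg_right hx
  calc ∫ x, log (1 + f x) ∂μ
      ≤ log (∫ x, (1 + f x) ∂μ) :=
        hconcave.le_map_integral hcont isClosed_Ici hmem ((integrable_const 1).add hf)
          (integrable_log_one_add hf hf_nonneg)
    _ = log (1 + ∫ x, f x ∂μ) := by
        rw [integral_add (integrable_const 1) hf, integral_const, probReal_univ, one_smul]

end LogOneAdd

section Cauchy

variable {Q : Measure ℝ} [IsProbabilityMeasure Q]

lemma klDiv_stdCauchy (hQ : Q ≪ volume) (hllr : Integrable (llr Q volume) Q)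
    (hsq : Integrable (fun x ↦ x ^ 2) Q) :
    klDiv Q stdCauchy =
      ((∫ x, llr Q volume x ∂Q + (log π + ∫ x, log (1 + x ^ 2) ∂Q) : ℝ) : EReal) := by
  have hdensity_pos (x : ℝ) : 0 < 1 / (π * (1 + x ^ 2)) := by positivity
  have hlog_density (x : ℝ) :
      log (ENNReal.ofReal (1 / (π * (1 + x ^ 2)))).toReal = -(log π + log (1 + x ^ 2)) := by
    rw [ENNReal.toReal_ofReal (hdensity_pos x).le, one_div, log_inv,
      log_mul pi_ne_zero (by positivity)]
  have hlog : Integrable (fun x : ℝ ↦ log (1 + x ^ 2)) Q :=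
    integrable_log_one_add hsq (ae_of_all _ sq_nonneg)
  have hlog_density_int :
      Integrable (fun x ↦ log (ENNReal.ofReal (1 / (π * (1 + x ^ 2)))).toReal) Q := by
    simp only [hlog_density]
    exact ((integrable_const _).add hlog).neg
  rw [stdCauchy, klDiv_withDensity_right hQ (by fun_prop)
    (ae_of_all _ fun x ↦ (ENNReal.ofReal_pos.2 (hdensity_pos x)).ne')
    (ae_of_all _ fun x ↦ ENNReal.ofReal_ne_top) hllr hlog_density_int]
  simp only [hlog_density]
  rw [integral_neg, sub_neg_eq_add, integral_add (integrable_const _) hlog, integral_const,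
    probReal_univ, one_smul]

lemma klDiv_stdCauchy_le (hQ : Q ≪ volume) (hllr : Integrable (llr Q volume) Q)
    (hsq : Integrable (fun x ↦ x ^ 2) Q) :
    klDiv Q stdCauchy ≤
      ((∫ x, llr Q volume x ∂Q + log (π * (1 + ∫ x, x ^ 2 ∂Q)) : ℝ) : EReal) := by
  rw [klDiv_stdCauchy hQ hllr hsq, EReal.coe_le_coe_iff, log_mul pi_ne_zero (by positivity)]
  gcongr
  exact integral_log_one_add_le hsq (ae_of_all _ sq_nonneg)

end Cauchy

section Gaussian

variable (m : ℝ) {v : ℝ≥0}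

lemma integrable_sq_gaussianReal : Integrable (fun x ↦ x ^ 2) (gaussianReal m v) :=
  (memLp_id_gaussianReal 2).integrable_sq

lemma integral_sq_gaussianReal : ∫ x, x ^ 2 ∂gaussianReal m v = m ^ 2 + v := by
  have hvar := variance_eq_sub (memLp_id_gaussianReal (μ := m) (v := v) 2)
  simp only [variance_id_gaussianReal, Pi.pow_apply, id_eq, integral_id_gaussianReal] at hvar
  linarith

lemma integrable_sub_mean_sq_gaussianReal :
    Integrable (fun x ↦ (x - m) ^ 2) (gaussianReal m v) :=
  ((memLp_id_gaussianReal 2).sub (memLp_const m)).integrable_sq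

lemma integral_sub_mean_sq_gaussianReal : ∫ x, (x - m) ^ 2 ∂gaussianReal m v = v := by
  have hvar := variance_fun_id_gaussianReal (μ := m) (v := v)
  rwa [variance_eq_integral aemeasurable_id', integral_id_gaussianReal] at hvar

lemma llr_gaussianReal_volume (hv : v ≠ 0) :
    llr (gaussianReal m v) volume =ᵐ[gaussianReal m v]
      fun x ↦ -(1 / 2) * log (2 * π * v) - (x - m) ^ 2 / (2 * v) := by
  filter_upwards [(gaussianReal_absolutelyContinuous m hv).ae_le (rnDeriv_gaussianReal m v)]
    with x hx
  rw [llr, hx, toReal_gaussianPDF, gaussianPDFReal, log_mul (by positivity) (exp_ne_zero _),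
    log_inv, log_sqrt (by positivity), log_exp]
  ring

lemma integrable_llr_gaussianReal_volume (hv : v ≠ 0) :
    Integrable (llr (gaussianReal m v) volume) (gaussianReal m v) :=
  ((integrable_const _).sub ((integrable_sub_mean_sq_gaussianReal m).div_const _)).congr
    (llr_gaussianReal_volume m hv).symm

lemma integral_llr_gaussianReal_volume (hv : v ≠ 0) :
    ∫ x, llr (gaussianReal m v) volume x ∂gaussianReal m v =
      -(1 / 2) * log (2 * π * exp 1 * v) := by
  calc ∫ x, llr (gaussianReal m v) volume x ∂gaussianReal m v
      = -(1 / 2) * log (2 * π * v) - v / (2 * v) := by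
        rw [integral_congr_ae (llr_gaussianReal_volume m hv), integral_sub (integrable_const _)
          ((integrable_sub_mean_sq_gaussianReal m).div_const _), integral_const, probReal_univ,
          one_smul, integral_div, integral_sub_mean_sq_gaussianReal]
    _ = -(1 / 2) * (log (2 * π * v) + 1) := by field_simp; ring
    _ = -(1 / 2) * log (2 * π * exp 1 * v) := by
        rw [mul_right_comm _ (exp 1), log_mul (by positivity) (exp_ne_zero 1), log_exp]

lemma klDiv_gaussianReal_stdCauchy_le (hv : v ≠ 0) :
    klDiv (gaussianReal m v) stdCauchy ≤
      ((log (π * (1 + m ^ 2 + v)) - 1 / 2 * log (2 * π * exp 1 * v) : ℝ) : EReal) := by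
  refine (klDiv_stdCauchy_le (gaussianReal_absolutelyContinuous m hv)
    (integrable_llr_gaussianReal_volume m hv) (integrable_sq_gaussianReal m)).trans_eq ?_
  rw [integral_llr_gaussianReal_volume m hv, integral_sq_gaussianReal, ← add_assoc, neg_mul,
    neg_add_eq_sub]

end Gaussian

lemma log_add_le_add_log {x a : ℝ} (hx : 1 ≤ x) (ha : 0 ≤ a) : log (x + a) ≤ a + log x := by
  have hx_pos : 0 < x := one_pos.trans_le hx
  calc log (x + a)
      ≤ log (exp a * x) := by
        gcongr
        nlinarith [add_one_le_exp a]
    _ = a + log x := by rw [log_mul (exp_ne_zero a) hx_pos.ne', log_exp]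

lemma log_pi_le_log_two_add_one : log π ≤ log 2 + 1 := by
  calc log π ≤ log (2 * exp 1) := by
        gcongr
        linarith [pi_lt_four, exp_one_gt_two]
    _ = log 2 + 1 := by rw [log_mul two_ne_zero (exp_ne_zero 1), log_exp]

lemma log_pi_mul_sub_half_log_le (m : ℝ) {ρ : ℝ} (hρ : 0 < ρ) :
    log (π * (1 + m ^ 2 + ρ ^ 2)) - 1 / 2 * log (2 * π * exp 1 * ρ ^ 2) ≤
      m ^ 2 + log (ρ + 1 / ρ) := by
  have hexpand : log (2 * π * exp 1 * ρ ^ 2) = log 2 + log π + 1 + 2 * log ρ := by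
    rw [log_mul (by positivity) (by positivity), log_mul (by positivity) (exp_ne_zero 1),
      log_mul two_ne_zero pi_ne_zero, log_exp, log_pow, Nat.cast_ofNat]
  have hlipschitz : log (1 + m ^ 2 + ρ ^ 2) ≤ m ^ 2 + log (1 + ρ ^ 2) := by
    rw [add_right_comm]
    exact log_add_le_add_log (le_add_of_nonneg_right (sq_nonneg ρ)) (sq_nonneg m)
  have hquotient : log (ρ + 1 / ρ) = log (1 + ρ ^ 2) - log ρ := by
    rw [← log_div (by positivity) hρ.ne']
    congr 1
    field_simp
    ring
  rw [log_mul pi_ne_zero (by positivity), hexpand, hquotient]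
  linarith [log_pi_le_log_two_add_one]

/-- The KL divergence from the Gaussian `N(λ̄, ρ²)` to the standard Cauchy distribution
is at most `log(π(1 + λ̄² + ρ²)) − (1/2)log(2πeρ²)`, and consequently at most
`λ̄² + log(ρ + 1/ρ)`. -/
theorem kl_gaussian_cauchy (lamBar ρ : ℝ) (hρ : 0 < ρ) :
    klDiv (ProbabilityTheory.gaussianReal lamBar (ρ^2).toNNReal) stdCauchy ≤
        ((Real.log (Real.pi * (1 + lamBar^2 + ρ^2))
          - (1/2) * Real.log (2 * Real.pi * Real.exp 1 * ρ^2) : ℝ) : EReal) ∧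
    klDiv (ProbabilityTheory.gaussianReal lamBar (ρ^2).toNNReal) stdCauchy ≤
        ((lamBar^2 + Real.log (ρ + 1/ρ) : ℝ) : EReal) := by
  have hv : (ρ ^ 2).toNNReal ≠ 0 := (Real.toNNReal_pos.2 (by positivity)).ne'
  have hbound := klDiv_gaussianReal_stdCauchy_le lamBar hv
  rw [Real.coe_toNNReal _ (sq_nonneg ρ)] at hbound
  exact ⟨hbound, hbound.trans (EReal.coe_le_coe_iff.2 (log_pi_mul_sub_half_log_le lamBar hρ))⟩
end

section
/- Let N = N(ᾱ, σ²) be the Gaussian probability measure on ℝ with mean ᾱ ∈ ℝ and variance σ² > 0, and let 𝒰₁(σ) be the Cauchy distribution with scale σ, i.e. the probability measure on ℝ with Lebesgue density α ↦ 1/(σπ(1 + α²/σ²)). Then D_KL(N(ᾱ,σ²)‖𝒰₁(σ)) ≤ log( 2 + ᾱ²/σ² ). -/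
open MeasureTheory Real
open scoped Classical

/-- The Cauchy distribution on `ℝ` with scale `σ`, having Lebesgue density
`α ↦ 1/(σπ(1 + α²/σ²))`. -/
noncomputable def cauchyScale (σ : ℝ) : Measure ℝ :=
  volume.withDensity fun α => ENNReal.ofReal (1 / (σ * Real.pi * (1 + α^2 / σ^2)))

open ProbabilityTheory
open scoped NNReal

/-!
The divergence is the cross-entropy of the Gaussian relative to the Cauchy density minus the
entropy of the Gaussian. The entropy is explicit, and the cross-entropy is a constant plus the mean
of `log (1 + ((x - x₀) / γ) ^ 2)`, which Jensen's inequality bounds by the logarithm of a second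
moment. When the variance equals the squared scale, the constants add up to `(log (π / 2) - 1) / 2`,
which is negative.
-/

section Density

variable {α : Type*} {mα : MeasurableSpace α} {μ : Measure α} [SigmaFinite μ] {f g : α → ℝ}

lemma llr_withDensity_ofReal_ae_eq (hf : Measurable f) (hg : AEMeasurable g μ)
    (hg_pos : ∀ᵐ x ∂μ, 0 < g x) :
    llr (μ.withDensity fun x ↦ ENNReal.ofReal (f x)) (μ.withDensity fun x ↦ ENNReal.ofReal (g x))
      =ᵐ[μ.withDensity fun x ↦ ENNReal.ofReal (f x)] fun x ↦ log (f x) - log (g x) := by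
  have h_right := Measure.rnDeriv_withDensity_right
    (μ.withDensity fun x ↦ ENNReal.ofReal (f x)) μ hg.ennreal_ofReal
    (hg_pos.mono fun x hx ↦ (ENNReal.ofReal_pos.2 hx).ne')
    (.of_forall fun _ ↦ ENNReal.ofReal_ne_top)
  rw [Filter.EventuallyEq, ae_withDensity_iff hf.ennreal_ofReal]
  filter_upwards [h_right, Measure.rnDeriv_withDensity μ hf.ennreal_ofReal, hg_pos]
    with x hx_right hx hgx hfx
  have hfx_pos : 0 < f x := ENNReal.ofReal_pos.1 (pos_iff_ne_zero.2 hfx)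
  rw [llr, hx_right, hx, ENNReal.toReal_mul, ENNReal.toReal_inv, ENNReal.toReal_ofReal hgx.le,
    ENNReal.toReal_ofReal hfx_pos.le, log_mul (inv_ne_zero hgx.ne') hfx_pos.ne', log_inv]
  ring

lemma klDiv_withDensity_ofReal (hf : Measurable f) (hg : AEMeasurable g μ)
    (hg_pos : ∀ᵐ x ∂μ, 0 < g x)
    (hf_log : Integrable (fun x ↦ log (f x)) (μ.withDensity fun x ↦ ENNReal.ofReal (f x)))
    (hg_log : Integrable (fun x ↦ log (g x)) (μ.withDensity fun x ↦ ENNReal.ofReal (f x))) :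
    klDiv (μ.withDensity fun x ↦ ENNReal.ofReal (f x))
        (μ.withDensity fun x ↦ ENNReal.ofReal (g x)) =
      ((∫ x, log (f x) ∂(μ.withDensity fun x ↦ ENNReal.ofReal (f x)) -
        ∫ x, log (g x) ∂(μ.withDensity fun x ↦ ENNReal.ofReal (f x)) : ℝ) : EReal) := by
  have h_ac := (withDensity_absolutelyContinuous μ fun x ↦ ENNReal.ofReal (f x)).trans
    (withDensity_absolutelyContinuous' hg.ennreal_ofReal
      (hg_pos.mono fun x hx ↦ (ENNReal.ofReal_pos.2 hx).ne'))
  have h_llr := llr_withDensity_ofReal_ae_eq hf hg hg_pos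
  rw [klDiv, if_pos ⟨h_ac, (hf_log.sub hg_log).congr h_llr.symm⟩, integral_congr_ae h_llr,
    integral_sub hf_log hg_log]

end Density

section LogOneAdd

variable {Ω : Type*} {mΩ : MeasurableSpace Ω} {P : Measure Ω} {Y : Ω → ℝ}

lemma integrable_log_one_add_s6 (hY : Integrable Y P) (hY_nonneg : 0 ≤ᵐ[P] Y) :
    Integrable (fun ω ↦ log (1 + Y ω)) P := by
  refine hY.mono' (measurable_log.comp_aemeasurable
    (hY.aemeasurable.const_add 1)).aestronglyMeasurable ?_
  filter_upwards [hY_nonneg] with ω hω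
  have hω' : 0 ≤ Y ω := hω
  rw [norm_of_nonneg (log_nonneg (by linarith))]
  linarith [log_le_sub_one_of_pos (show 0 < 1 + Y ω by linarith)]

lemma integral_log_one_add_le_s6 [IsProbabilityMeasure P] (hY : Integrable Y P)
    (hY_nonneg : 0 ≤ᵐ[P] Y) : ∫ ω, log (1 + Y ω) ∂P ≤ log (1 + ∫ ω, Y ω ∂P) := by
  have h_sub : Set.Ici (1 : ℝ) ⊆ Set.Ioi 0 := Set.Ici_subset_Ioi.2 one_pos
  have h_jensen := (strictConcaveOn_log_Ioi.concaveOn.subset h_sub (convex_Ici 1)).le_map_integral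
    (continuousOn_log.mono fun x hx ↦ (h_sub hx).ne') isClosed_Ici
    (hY_nonneg.mono fun ω hω ↦ le_add_of_nonneg_right hω) ((integrable_const 1).add hY)
    (integrable_log_one_add_s6 hY hY_nonneg)
  simpa [integral_add (integrable_const 1) hY] using h_jensen

end LogOneAdd

section SecondMoment

lemma integral_sub_const_sq {Ω : Type*} {mΩ : MeasurableSpace Ω} {P : Measure Ω}
    [IsProbabilityMeasure P] {X : Ω → ℝ} (hX : MemLp X 2 P) (c : ℝ) :
    ∫ ω, (X ω - c) ^ 2 ∂P = Var[X; P] + (∫ ω, X ω ∂P - c) ^ 2 := by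
  have h_var := variance_eq_sub (hX.sub (memLp_const c))
  have h_mean : ∫ ω, (X ω - c) ∂P = ∫ ω, X ω ∂P - c := by
    simp [integral_sub (hX.integrable one_le_two) (integrable_const c)]
  simp only [Pi.sub_def, Pi.pow_apply, variance_sub_const hX.aestronglyMeasurable, h_mean] at h_var
  linarith

variable (m : ℝ) (v : ℝ≥0) (c : ℝ)

lemma integrable_sub_const_sq_gaussianReal :
    Integrable (fun x ↦ (x - c) ^ 2) (gaussianReal m v) :=
  ((memLp_id_gaussianReal 2).sub (memLp_const c)).integrable_sq

lemma integral_sub_const_sq_gaussianReal :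
    ∫ x, (x - c) ^ 2 ∂gaussianReal m v = v + (m - c) ^ 2 := by
  simpa using integral_sub_const_sq (memLp_id_gaussianReal (μ := m) (v := v) 2) c

end SecondMoment

section GaussianEntropy

variable (m : ℝ) {v : ℝ≥0}

lemma log_gaussianPDFReal (hv : v ≠ 0) (x : ℝ) :
    log (gaussianPDFReal m v x) = -log (2 * π * v) / 2 - (x - m) ^ 2 / (2 * v) := by
  rw [gaussianPDFReal, log_mul (by positivity) (exp_ne_zero _), log_inv, log_exp,
    log_sqrt (by positivity)]
  ring

lemma integrable_log_gaussianPDFReal (hv : v ≠ 0) :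
    Integrable (fun x ↦ log (gaussianPDFReal m v x)) (gaussianReal m v) := by
  simp only [log_gaussianPDFReal m hv]
  exact (integrable_const _).sub ((integrable_sub_const_sq_gaussianReal m v m).div_const _)

lemma integral_log_gaussianPDFReal (hv : v ≠ 0) :
    ∫ x, log (gaussianPDFReal m v x) ∂gaussianReal m v = -(log (2 * π * v) + 1) / 2 := by
  simp only [log_gaussianPDFReal m hv]
  rw [integral_sub (integrable_const _) ((integrable_sub_const_sq_gaussianReal m v m).div_const _),
    integral_div (2 * v : ℝ), integral_sub_const_sq_gaussianReal, integral_const, probReal_univ,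
    one_smul]
  field

end GaussianEntropy

section CauchyCrossEntropy

variable (x₀ : ℝ) {γ : ℝ≥0}

lemma log_cauchyPDFReal (hγ : γ ≠ 0) (x : ℝ) :
    log (cauchyPDFReal x₀ γ x) = -log (π * γ) - log (1 + (x - x₀) ^ 2 / γ ^ 2) := by
  rw [cauchyPDFReal_def', NNReal.coe_inv, ← mul_inv, div_pow,
    log_mul (by positivity) (by positivity), log_inv, log_inv, ← sub_eq_add_neg]

variable {Q : Measure ℝ}

lemma integrable_log_cauchyPDFReal [IsFiniteMeasure Q] (hγ : γ ≠ 0)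
    (hQ : Integrable (fun x ↦ (x - x₀) ^ 2) Q) :
    Integrable (fun x ↦ log (cauchyPDFReal x₀ γ x)) Q := by
  simp only [log_cauchyPDFReal x₀ hγ]
  exact (integrable_const _).sub
    (integrable_log_one_add_s6 (hQ.div_const _) (.of_forall fun x ↦ by positivity))

lemma neg_integral_log_cauchyPDFReal_le [IsProbabilityMeasure Q] (hγ : γ ≠ 0)
    (hQ : Integrable (fun x ↦ (x - x₀) ^ 2) Q) :
    -∫ x, log (cauchyPDFReal x₀ γ x) ∂Q ≤
      log (π * γ) + log (1 + (∫ x, (x - x₀) ^ 2 ∂Q) / γ ^ 2) := by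
  have h_nonneg : 0 ≤ᵐ[Q] fun x ↦ (x - x₀) ^ 2 / (γ : ℝ) ^ 2 := .of_forall fun x ↦ by positivity
  have h_jensen := integral_log_one_add_le_s6 (hQ.div_const _) h_nonneg
  rw [integral_div] at h_jensen
  simp only [log_cauchyPDFReal x₀ hγ]
  rw [integral_sub (integrable_const _) (integrable_log_one_add_s6 (hQ.div_const _) h_nonneg),
    integral_const, probReal_univ, one_smul]
  linarith

end CauchyCrossEntropy

lemma cauchyScale_eq_cauchyMeasure {σ : ℝ} (hσ : 0 < σ) :
    cauchyScale σ = cauchyMeasure 0 σ.toNNReal := by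
  rw [cauchyScale, cauchyMeasure_of_scale_ne_zero 0 (toNNReal_pos.2 hσ).ne']
  congr with x
  rw [cauchyPDF, cauchyPDFReal_def', NNReal.coe_inv, coe_toNNReal σ hσ.le]
  congr 1
  field

lemma klDiv_gaussianReal_cauchyMeasure (m x₀ : ℝ) {v γ : ℝ≥0} (hv : v ≠ 0) (hγ : γ ≠ 0) :
    klDiv (gaussianReal m v) (cauchyMeasure x₀ γ) =
      ((∫ x, log (gaussianPDFReal m v x) ∂gaussianReal m v -
        ∫ x, log (cauchyPDFReal x₀ γ x) ∂gaussianReal m v : ℝ) : EReal) := by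
  have hf := integrable_log_gaussianPDFReal m hv
  have hg := integrable_log_cauchyPDFReal x₀ hγ (integrable_sub_const_sq_gaussianReal m v x₀)
  rw [cauchyMeasure_of_scale_ne_zero x₀ hγ]
  rw [gaussianReal_of_var_ne_zero m hv] at hf hg ⊢
  exact klDiv_withDensity_ofReal (measurable_gaussianPDFReal m v)
    (measurable_cauchyPDFReal x₀ γ).aemeasurable (.of_forall (cauchyPDF_pos x₀ hγ)) hf hg

theorem kl_gaussian_cauchy_scale_general (m x₀ : ℝ) {v γ : ℝ≥0} (hv : v ≠ 0) (hγ : γ ≠ 0) :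
    klDiv (gaussianReal m v) (cauchyMeasure x₀ γ) ≤
      ((log (1 + (v + (m - x₀) ^ 2) / γ ^ 2) + (log (π * γ ^ 2 / (2 * v)) - 1) / 2 : ℝ) :
        EReal) := by
  have h_cross := neg_integral_log_cauchyPDFReal_le x₀ hγ
    (integrable_sub_const_sq_gaussianReal m v x₀)
  have h_log : log (π * γ ^ 2 / (2 * v)) = 2 * log (π * γ) - log (2 * π * v) := by
    rw [← log_rpow (by positivity), ← log_div (by positivity) (by positivity), rpow_two]
    congr 1
    field
  rw [integral_sub_const_sq_gaussianReal] at h_cross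
  rw [klDiv_gaussianReal_cauchyMeasure m x₀ hv hγ, EReal.coe_le_coe_iff,
    integral_log_gaussianPDFReal m hv]
  linarith

lemma log_pi_div_two_le_one : log (π / 2) ≤ 1 := by
  linarith [log_le_sub_one_of_pos pi_div_two_pos, pi_le_four]

lemma klDiv_gaussianReal_sq_cauchyMeasure_le (m x₀ : ℝ) {γ : ℝ≥0} (hγ : γ ≠ 0) :
    klDiv (gaussianReal m (γ ^ 2)) (cauchyMeasure x₀ γ) ≤
      ((log (2 + (m - x₀) ^ 2 / γ ^ 2) : ℝ) : EReal) := by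
  refine (kl_gaussian_cauchy_scale_general m x₀ (pow_ne_zero 2 hγ) hγ).trans
    (EReal.coe_le_coe_iff.2 ?_)
  have h_arg : 1 + (γ ^ 2 + (m - x₀) ^ 2) / (γ : ℝ) ^ 2 = 2 + (m - x₀) ^ 2 / γ ^ 2 := by field
  have h_const : π * γ ^ 2 / (2 * γ ^ 2) = π / 2 := by field
  rw [NNReal.coe_pow, h_arg, h_const]
  linarith [log_pi_div_two_le_one]

/-- The KL divergence from the Gaussian `N(ᾱ, σ²)` to the Cauchy distribution with
scale `σ` is at most `log(2 + ᾱ²/σ²)`. -/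
theorem kl_gaussian_cauchy_scale (alphaBar σ : ℝ) (hσ : 0 < σ) :
    klDiv (ProbabilityTheory.gaussianReal alphaBar (σ^2).toNNReal) (cauchyScale σ) ≤
      ((Real.log (2 + alphaBar^2 / σ^2) : ℝ) : EReal) := by
  simpa only [cauchyScale_eq_cauchyMeasure hσ, toNNReal_pow hσ.le, coe_toNNReal σ hσ.le, sub_zero]
    using klDiv_gaussianReal_sq_cauchyMeasure_le alphaBar 0 (toNNReal_pos.2 hσ).ne'
end

section
/- (Expected Gaussian spectral norms.) Let m ≥ 1 and let G = (g_{ij}) be an m × m random matrix whose entries are independent, with g_{ij} Gaussian of mean m_{ij} ∈ ℝ and variance v_{ij} ≥ 0 for i, j ∈ {1,…,m}. Let M = (m_{ij}), let v = max( max_i Σ_{j=1}^m v_{ij}, max_j Σ_{i=1}^m v_{ij} ), and let γ_m = sqrt(2·log(2em)). Then sqrt( E[ ‖G‖₂² ] ) ≤ ‖M‖₂ + γ_m · sqrt(v), where ‖A‖₂ denotes the spectral (ℓ²-operator) norm of the matrix A. -/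
open MeasureTheory Real ProbabilityTheory

/-- The spectral (ℓ²-operator) norm of a real square matrix. -/
noncomputable def specNorm {m : ℕ} (A : Matrix (Fin m) (Fin m) ℝ) : ℝ :=
  ‖LinearMap.toContinuousLinearMap (Matrix.toEuclideanLin A)‖

/-!
Let `X = ∑ k, x k • A k` be a Gaussian series with Hermitian coefficients in dimension `N`, and put
`V = ∑ k, w k • (A k * A k)`. Gaussian integration by parts expands `E tr X ^ (2 * p + 2)` into the
terms `w k * E tr (A k * X ^ q * A k * X ^ r)` with `q + r = 2 * p`. In an eigenbasis of `X` each
trace is at most `tr (A k * A k * X ^ (2 * p))`, so the moment is at most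
`(2 * p + 1) * ‖V‖ * E tr X ^ (2 * p)`, and inductively
`E ‖X‖ ^ (2 * p) ≤ (2 * p - 1)‼ * N * ‖V‖ ^ p`. By Jensen's inequality and Stirling's formula, the
choice `p = ⌊log N⌋ + 1` gives `E ‖X‖ ^ 2 ≤ 2 * log (exp 1 * N) * ‖V‖`.

An arbitrary series is reduced to this one by its Hermitian dilation, which doubles the dimension of
a square matrix and hence accounts for the factor `2` inside the logarithm. For independent entries
the two blocks of `V` are the diagonal matrices of row and column sums of the variances. Minkowski's
inequality in `L²` adds the mean.
-/

section GaussianMoments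

open scoped NNReal

lemma integrable_pow_gaussianReal (μ : ℝ) (v : ℝ≥0) (n : ℕ) :
    Integrable (fun x : ℝ => x ^ n) (gaussianReal μ v) := by
  refine (memLp_id_gaussianReal (n : ℝ≥0)).integrable_norm_pow'.mono (by fun_prop) ?_
  simp

lemma integrable_gaussianPDFReal_mul_pow (μ : ℝ) (v : ℝ≥0) (n : ℕ) :
    Integrable (fun x : ℝ => gaussianPDFReal μ v x * x ^ n) := by
  rcases eq_or_ne v 0 with rfl | hv
  · simp
  have h := integrable_pow_gaussianReal μ v n
  rw [gaussianReal_of_var_ne_zero μ hv,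
    integrable_withDensity_iff_integrable_smul' (measurable_gaussianPDF μ v)
      (ae_of_all _ fun _ => gaussianPDF_lt_top)] at h
  simpa only [toReal_gaussianPDF, smul_eq_mul] using h

lemma hasDerivAt_gaussianPDFReal (μ : ℝ) (v : ℝ≥0) (x : ℝ) :
    HasDerivAt (gaussianPDFReal μ v) (-(x - μ) / v * gaussianPDFReal μ v x) x := by
  have hexponent : HasDerivAt (fun x => -(x - μ) ^ 2 / (2 * v)) (-(x - μ) / v) x := by
    refine (((hasDerivAt_id x).sub_const μ).pow 2).neg.div_const (2 * (v : ℝ)) |>.congr_deriv ?_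
    simp only [id, Nat.cast_ofNat, Nat.add_one_sub_one, pow_one, mul_one]
    rw [← mul_neg, mul_div_mul_left _ _ two_ne_zero]
  exact (hexponent.exp.const_mul _).congr_deriv (by rw [gaussianPDFReal]; ring)

lemma integral_sub_mul_pow_gaussianReal (μ : ℝ) (v : ℝ≥0) (n : ℕ) :
    ∫ x, (x - μ) * x ^ n ∂gaussianReal μ v = v * (n * ∫ x, x ^ (n - 1) ∂gaussianReal μ v) := by
  rcases eq_or_ne v 0 with rfl | hv
  · simp
  have hint (k : ℕ) := integrable_gaussianPDFReal_mul_pow μ v k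
  have hint' : Integrable fun x => x ^ n * ((x - μ) * gaussianPDFReal μ v x) :=
    ((hint (n + 1)).sub ((hint n).const_mul μ)).congr (ae_of_all _ fun x => by simp; ring)
  have hderiv (x : ℝ) : HasDerivAt (fun x => -v * gaussianPDFReal μ v x)
      ((x - μ) * gaussianPDFReal μ v x) x :=
    ((hasDerivAt_gaussianPDFReal μ v x).const_mul (-v : ℝ)).congr_deriv (by field_simp)
  have hparts := integral_mul_deriv_eq_deriv_mul_of_integrable
    (fun x _ => hasDerivAt_pow n x) (fun x _ => hderiv x) hint'
    (((hint (n - 1)).const_mul (-(v * n : ℝ))).congr (ae_of_all _ fun x => by simp; ring))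
    (((hint n).const_mul (-v : ℝ)).congr (ae_of_all _ fun x => by simp; ring))
  simp only [integral_gaussianReal_eq_integral_smul hv, smul_eq_mul]
  calc ∫ x, gaussianPDFReal μ v x * ((x - μ) * x ^ n)
      = ∫ x, x ^ n * ((x - μ) * gaussianPDFReal μ v x) := by congr with x; ring
    _ = ∫ x, v * (n * (gaussianPDFReal μ v x * x ^ (n - 1))) := by
      rw [hparts, ← integral_neg]; congr with x; ring
    _ = v * (n * ∫ x, gaussianPDFReal μ v x * x ^ (n - 1)) := by simp only [integral_const_mul]

end GaussianMoments

section GaussianProduct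

open MvPolynomial
open scoped NNReal

variable {ι : Type*} [Fintype ι]

/-- The joint law of independent centred real Gaussians with variances `w k`. -/
noncomputable abbrev centredGaussianPi (w : ι → ℝ≥0) : Measure (ι → ℝ) :=
  Measure.pi fun k => gaussianReal 0 (w k)

lemma integrable_eval_monomial (w : ι → ℝ≥0) (s : ι →₀ ℕ) (a : ℝ) :
    Integrable (fun x => eval x (monomial s a)) (centredGaussianPi w) := by
  simp only [eval_monomial, Finsupp.prod_fintype _ _ fun _ => pow_zero _]
  exact (Integrable.fintype_prod_dep fun k =>
    integrable_pow_gaussianReal 0 (w k) (s k)).const_mul a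

lemma integral_eval_monomial (w : ι → ℝ≥0) (s : ι →₀ ℕ) (a : ℝ) :
    ∫ x, eval x (monomial s a) ∂centredGaussianPi w
      = a * ∏ k, ∫ t, t ^ s k ∂gaussianReal 0 (w k) := by
  simp only [eval_monomial, Finsupp.prod_fintype _ _ fun _ => pow_zero _]
  rw [integral_const_mul, integral_fintype_prod_eq_prod fun k (t : ℝ) => t ^ s k]

lemma integrable_eval_mvPolynomial (w : ι → ℝ≥0) (P : MvPolynomial ι ℝ) :
    Integrable (fun x => eval x P) (centredGaussianPi w) := by
  induction P using MvPolynomial.induction_on' with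
  | monomial s a => exact integrable_eval_monomial w s a
  | add P Q hP hQ => simp only [map_add]; exact hP.add hQ

lemma integral_eval_X_mul_monomial (w : ι → ℝ≥0) (k : ι) (s : ι →₀ ℕ) (a : ℝ) :
    ∫ x, eval x (X k * monomial s a) ∂centredGaussianPi w
      = w k * ∫ x, eval x (pderiv k (monomial s a)) ∂centredGaussianPi w := by
  classical
  have hstein := integral_sub_mul_pow_gaussianReal 0 (w k) (s k)
  simp only [sub_zero, ← pow_succ'] at hstein
  have hfactor (r : ι →₀ ℕ) (hr : ∀ i ≠ k, r i = s i) :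
      ∏ i, ∫ t, t ^ r i ∂gaussianReal 0 (w i) = (∫ t, t ^ r k ∂gaussianReal 0 (w k)) *
        ∏ i ∈ Finset.univ.erase k, ∫ t, t ^ s i ∂gaussianReal 0 (w i) := by
    rw [← Finset.mul_prod_erase _ _ (Finset.mem_univ k)]
    congr 1
    exact Finset.prod_congr rfl fun i hi => by rw [hr i (Finset.ne_of_mem_erase hi)]
  rw [X, monomial_mul, one_mul, pderiv_monomial, integral_eval_monomial, integral_eval_monomial,
    hfactor (.single k 1 + s) fun i hi => by simp [hi],
    hfactor (s - .single k 1) fun i hi => by simp [hi]]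
  simp only [Finsupp.coe_add, Finsupp.coe_tsub, Pi.add_apply, Pi.sub_apply,
    Finsupp.single_eq_same, add_comm 1, hstein]
  ring

theorem integral_eval_X_mul (w : ι → ℝ≥0) (k : ι) (P : MvPolynomial ι ℝ) :
    ∫ x, eval x (X k * P) ∂centredGaussianPi w
      = w k * ∫ x, eval x (pderiv k P) ∂centredGaussianPi w := by
  induction P using MvPolynomial.induction_on' with
  | monomial s a => exact integral_eval_X_mul_monomial w k s a
  | add P Q hP hQ =>
    simp only [map_add, mul_add]
    rw [integral_add (integrable_eval_mvPolynomial w _) (integrable_eval_mvPolynomial w _),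
      integral_add (integrable_eval_mvPolynomial w _) (integrable_eval_mvPolynomial w _), hP, hQ,
      mul_add]

end GaussianProduct

section TraceInequalities

open Matrix Unitary
open scoped Matrix.Norms.L2Operator

variable {m n : Type*} [Fintype m] [Fintype n] [DecidableEq n]

lemma pow_mul_pow_add_pow_mul_pow_le (a b : ℝ) {q r : ℕ} (h : Even (q + r)) :
    a ^ q * b ^ r + b ^ q * a ^ r ≤ a ^ (q + r) + b ^ (q + r) := by
  have hchebyshev : 0 ≤ (|a| ^ q - |b| ^ q) * (|a| ^ r - |b| ^ r) := by
    rcases le_total |a| |b| with hab | hab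
    · exact mul_nonneg_of_nonpos_of_nonpos
        (sub_nonpos.mpr <| by gcongr) (sub_nonpos.mpr <| by gcongr)
    · exact mul_nonneg (sub_nonneg.mpr <| by gcongr) (sub_nonneg.mpr <| by gcongr)
  have habs (c d : ℝ) : c ^ q * d ^ r ≤ |c| ^ q * |d| ^ r := by
    simpa only [abs_mul, abs_pow] using le_abs_self (c ^ q * d ^ r)
  calc a ^ q * b ^ r + b ^ q * a ^ r
      ≤ |a| ^ q * |b| ^ r + |b| ^ q * |a| ^ r := add_le_add (habs a b) (habs b a)
    _ ≤ |a| ^ (q + r) + |b| ^ (q + r) := by simp only [pow_add]; linarith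
    _ = a ^ (q + r) + b ^ (q + r) := by rw [h.pow_abs, h.pow_abs]

lemma trace_conjStarAlgAut {𝕜 : Type*} [RCLike 𝕜] (U : unitaryGroup n 𝕜) (A : Matrix n n 𝕜) :
    (conjStarAlgAut 𝕜 _ U A).trace = A.trace := by
  rw [conjStarAlgAut_apply, trace_mul_cycle, coe_star_mul_self, one_mul]

lemma norm_conjStarAlgAut {𝕜 : Type*} [RCLike 𝕜] (U : unitaryGroup n 𝕜) (A : Matrix n n 𝕜) :
    ‖conjStarAlgAut 𝕜 _ U A‖ = ‖A‖ := by
  rw [conjStarAlgAut_apply, ← coe_star, CStarRing.norm_mul_coe_unitary,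
    CStarRing.norm_coe_unitary_mul]

lemma exists_eq_conjStarAlgAut_diagonal {H : Matrix n n ℝ} (hH : H.IsHermitian) :
    ∃ (U : unitaryGroup n ℝ) (d : n → ℝ), H = conjStarAlgAut ℝ _ U (diagonal d) :=
  ⟨_, _, hH.spectral_theorem⟩

lemma trace_mul_diagonal_pow_mul_le {B : Matrix n n ℝ} (hB : B.IsHermitian) (d : n → ℝ)
    {q r : ℕ} (h : Even (q + r)) :
    (B * diagonal d ^ q * B * diagonal d ^ r).trace ≤ (B * B * diagonal d ^ (q + r)).trace := by
  have hsymm (i j : n) : B j i = B i j := hB.apply i j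
  have htrace (C : Matrix n n ℝ) (e : n → ℝ) :
      (C * B * diagonal e).trace = ∑ i, ∑ j, C i j * B i j * e i := by
    refine Finset.sum_congr rfl fun i _ => ?_
    rw [diag_apply, mul_diagonal, Matrix.mul_apply, Finset.sum_mul]
    simp only [← hsymm i]
  have hleft : (B * diagonal d ^ q * B * diagonal d ^ r).trace
      = ∑ i, ∑ j, B i j ^ 2 * (d j ^ q * d i ^ r) := by
    simp only [diagonal_pow, htrace, mul_diagonal, Pi.pow_apply]
    congr! 2 with i _ j
    ring
  have hright : (B * B * diagonal d ^ (q + r)).trace = ∑ i, ∑ j, B i j ^ 2 * d i ^ (q + r) := by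
    simp only [diagonal_pow, htrace, Pi.pow_apply, sq]
  have hswap (f : n → n → ℝ) : ∑ i, ∑ j, B i j ^ 2 * f i j = ∑ i, ∑ j, B i j ^ 2 * f j i := by
    rw [Finset.sum_comm]
    simp only [hsymm]
  have hpair : ∑ i, ∑ j, B i j ^ 2 * (d j ^ q * d i ^ r) + ∑ i, ∑ j, B i j ^ 2 * (d i ^ q * d j ^ r)
      ≤ ∑ i, ∑ j, B i j ^ 2 * d i ^ (q + r) + ∑ i, ∑ j, B i j ^ 2 * d j ^ (q + r) := by
    simp only [← Finset.sum_add_distrib, ← mul_add]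
    gcongr ∑ i, ∑ j, _ * ?_ with i _ j _
    linarith [pow_mul_pow_add_pow_mul_pow_le (d i) (d j) h]
  rw [hleft, hright]
  linarith [hswap fun i j => d j ^ q * d i ^ r, hswap fun i _ => d i ^ (q + r)]

theorem trace_mul_pow_mul_pow_le {A H : Matrix n n ℝ} (hA : A.IsHermitian)
    (hH : H.IsHermitian) {q r : ℕ} (h : Even (q + r)) :
    (A * H ^ q * A * H ^ r).trace ≤ (A * A * H ^ (q + r)).trace := by
  obtain ⟨U, d, rfl⟩ := exists_eq_conjStarAlgAut_diagonal hH
  obtain ⟨B, rfl⟩ : ∃ B, conjStarAlgAut ℝ _ U B = A :=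
    ⟨_, (conjStarAlgAut ℝ _ U).apply_symm_apply A⟩
  have hB : B.IsHermitian :=
    (conjStarAlgAut ℝ _ U).injective ((map_star (conjStarAlgAut ℝ _ U) B).trans hA)
  simp only [← map_pow, ← map_mul, trace_conjStarAlgAut]
  exact trace_mul_diagonal_pow_mul_le hB d h

lemma trace_conjTranspose_mul_mul_le (V : Matrix n n ℝ) (K : Matrix n m ℝ) :
    (Kᴴ * V * K).trace ≤ ‖V‖ * (Kᴴ * K).trace := by
  simp only [trace, Finset.mul_sum]
  gcongr with j
  set x : EuclideanSpace ℝ n := WithLp.toLp 2 (K.col j)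
  calc (Kᴴ * V * K) j j = inner ℝ x (WithLp.toLp 2 (V *ᵥ x)) := by
        rw [Matrix.mul_assoc, EuclideanSpace.inner_eq_star_dotProduct, dotProduct_comm]
        rfl
    _ ≤ ‖x‖ * (‖V‖ * ‖x‖) := (real_inner_le_norm _ _).trans <| by
        gcongr
        exact l2_opNorm_mulVec V x
    _ = ‖V‖ * inner ℝ x x := by rw [real_inner_self_eq_norm_mul_norm]; ring
    _ = ‖V‖ * (Kᴴ * K) j j := by
        rw [EuclideanSpace.inner_eq_star_dotProduct, dotProduct_comm]
        rfl

theorem trace_mul_even_pow_le {H : Matrix n n ℝ} (hH : H.IsHermitian)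
    (V : Matrix n n ℝ) (p : ℕ) : (V * H ^ (2 * p)).trace ≤ ‖V‖ * (H ^ (2 * p)).trace := by
  have h := trace_conjTranspose_mul_mul_le V (H ^ p)
  rwa [(hH.pow p).eq, mul_assoc, trace_mul_comm, mul_assoc, ← pow_add, ← two_mul] at h

theorem norm_pow_even_le_trace {H : Matrix n n ℝ} (hH : H.IsHermitian) {p : ℕ} (hp : p ≠ 0) :
    ‖H‖ ^ (2 * p) ≤ (H ^ (2 * p)).trace := by
  obtain ⟨U, d, rfl⟩ := exists_eq_conjStarAlgAut_diagonal hH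
  simp only [norm_conjStarAlgAut, ← map_pow, trace_conjStarAlgAut, l2_opNorm_diagonal,
    diagonal_pow, trace_diagonal, Pi.pow_apply]
  have hnonneg (i : n) : 0 ≤ d i ^ (2 * p) := (even_two_mul p).pow_nonneg _
  cases isEmpty_or_nonempty n
  · simp [Subsingleton.elim d 0, hp]
  obtain ⟨i, hi⟩ := Finite.exists_max fun i => ‖d i‖
  calc ‖d‖ ^ (2 * p) ≤ ‖d i‖ ^ (2 * p) := by
        gcongr
        exact (pi_norm_le_iff_of_nonneg (norm_nonneg _)).2 hi
    _ = d i ^ (2 * p) := (even_two_mul p).pow_abs _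
    _ ≤ ∑ i, d i ^ (2 * p) := Finset.single_le_sum (fun i _ => hnonneg i) (Finset.mem_univ i)

end TraceInequalities

section MatrixDerivation

open Matrix
open Finset.HasAntidiagonal (antidiagonal)

variable {n R S : Type*} [Fintype n] [CommSemiring R] [CommSemiring S] [Algebra R S]

lemma map_derivation_mul (D : Derivation R S S) (A B : Matrix n n S) :
    (A * B).map D = A.map D * B + A * B.map D := by
  ext i j
  simp only [map_apply, Matrix.mul_apply, Matrix.add_apply, map_sum, Derivation.leibniz,
    smul_eq_mul, ← Finset.sum_add_distrib]
  exact Finset.sum_congr rfl fun k _ => by ring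

lemma map_derivation_pow [DecidableEq n] (D : Derivation R S S) (A : Matrix n n S) (p : ℕ) :
    (A ^ (p + 1)).map D = ∑ q ∈ antidiagonal p, A ^ q.1 * A.map D * A ^ q.2 := by
  induction p with
  | zero => simp
  | succ p ih =>
    rw [pow_succ, map_derivation_mul, ih, Finset.Nat.sum_antidiagonal_succ', Finset.sum_mul,
      add_comm, pow_zero, mul_one]
    simp only [pow_succ, mul_assoc]

end MatrixDerivation

section MatrixSeries

open Matrix

section CommSemiring

variable {ι m n R S : Type*} [Fintype ι] [CommSemiring R] [CommSemiring S]

/-- The linear matrix series `∑ k, x k • A k` with coefficients `A k` and scalar variables `x k`. -/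
def matrixSeries (A : ι → Matrix m n R) (x : ι → R) : Matrix m n R := ∑ k, x k • A k

lemma map_matrixSeries (f : R →+* S) (A : ι → Matrix m n R) (x : ι → R) :
    (matrixSeries A x).map f = matrixSeries (fun k => (A k).map f) (f ∘ x) := by
  ext i j
  simp [matrixSeries, Matrix.sum_apply]

lemma isHermitian_matrixSeries [StarRing R] [TrivialStar R] {A : ι → Matrix n n R}
    (hA : ∀ k, (A k).IsHermitian) (x : ι → R) : (matrixSeries A x).IsHermitian :=
  isSelfAdjoint_sum _ fun k _ => (IsSelfAdjoint.all (x k)).smul (hA k)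

end CommSemiring

section Generic

open MvPolynomial
open Finset.HasAntidiagonal (antidiagonal)

variable {ι m n R : Type*} [CommSemiring R]

lemma map_eval_map_C (x : ι → R) (B : Matrix m n R) : (B.map C).map (eval x) = B := by
  ext i j
  simp

variable [Fintype ι]

/-- The matrix series `∑ k, X k • A k` whose scalar variables are polynomial indeterminates; its
specialisation at `x` is `matrixSeries A x`. -/
noncomputable def genericMatrixSeries (A : ι → Matrix m n R) : Matrix m n (MvPolynomial ι R) :=
  matrixSeries (fun k => (A k).map C) X

lemma map_pderiv_genericMatrixSeries (A : ι → Matrix m n R) (k : ι) :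
    (genericMatrixSeries A).map (pderiv k) = (A k).map C := by
  classical
  ext i j
  simp [genericMatrixSeries, matrixSeries, Matrix.sum_apply, pderiv_X, Pi.single_apply]

lemma map_eval_genericMatrixSeries (A : ι → Matrix m n R) (x : ι → R) :
    (genericMatrixSeries A).map (eval x) = matrixSeries A x := by
  simp only [genericMatrixSeries, map_matrixSeries, map_eval_map_C, Function.comp_def, eval_X]

variable [Fintype n] [DecidableEq n]

lemma eval_trace_genericMatrixSeries (A : ι → Matrix n n R) (B D : Matrix n n R) (q r : ℕ)
    (x : ι → R) :
    eval x (B.map C * genericMatrixSeries A ^ q * D.map C * genericMatrixSeries A ^ r).trace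
      = (B * matrixSeries A x ^ q * D * matrixSeries A x ^ r).trace := by
  rw [AddMonoidHom.map_trace (eval x)]
  simp only [Matrix.map_mul, Matrix.map_pow, map_eval_map_C, map_eval_genericMatrixSeries]

lemma pderiv_trace_mul_genericMatrixSeries_pow (A : ι → Matrix n n R) (B : Matrix n n R) (k : ι)
    (p : ℕ) : pderiv k (B.map C * genericMatrixSeries A ^ (p + 1)).trace
      = ∑ q ∈ antidiagonal p, (B.map C * genericMatrixSeries A ^ q.1 * (A k).map C
          * genericMatrixSeries A ^ q.2).trace := by
  have hconst : (B.map C).map (pderiv k) = 0 := by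
    ext i j
    simp
  rw [← map_pderiv_genericMatrixSeries, ← trace_sum]
  simp only [mul_assoc, ← Finset.mul_sum]
  simp only [← mul_assoc (genericMatrixSeries A ^ _), ← map_derivation_pow]
  rw [AddMonoidHom.map_trace (pderiv k), map_derivation_mul, hconst, zero_mul, zero_add]

end Generic

end MatrixSeries

section TraceMoments

open Matrix MvPolynomial
open Finset.HasAntidiagonal (antidiagonal)
open scoped NNReal Nat Matrix.Norms.L2Operator

variable {ι n : Type*} [Fintype ι] [Fintype n] [DecidableEq n]

lemma integrable_trace_mul_pow_mul_pow (w : ι → ℝ≥0) (A : ι → Matrix n n ℝ)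
    (B D : Matrix n n ℝ) (q r : ℕ) :
    Integrable (fun x => (B * matrixSeries A x ^ q * D * matrixSeries A x ^ r).trace)
      (centredGaussianPi w) :=
  (integrable_eval_mvPolynomial w _).congr
    (ae_of_all _ (eval_trace_genericMatrixSeries A B D q r))

lemma integrable_trace_mul_pow (w : ι → ℝ≥0) (A : ι → Matrix n n ℝ) (B : Matrix n n ℝ) (p : ℕ) :
    Integrable (fun x => (B * matrixSeries A x ^ p).trace) (centredGaussianPi w) := by
  simpa using integrable_trace_mul_pow_mul_pow w A B 1 p 0

lemma eval_X_mul_trace (A : ι → Matrix n n ℝ) (B : Matrix n n ℝ) (k : ι) (p : ℕ) (x : ι → ℝ) :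
    eval x (X k * (B.map C * genericMatrixSeries A ^ p).trace)
      = x k * (B * matrixSeries A x ^ p).trace := by
  have h := eval_trace_genericMatrixSeries A B 1 p 0 x
  rw [Matrix.map_one _ C_0 C_1] at h
  simp only [mul_one, pow_zero] at h
  rw [map_mul, eval_X, h]

lemma integral_mul_trace_mul_pow (w : ι → ℝ≥0) (A : ι → Matrix n n ℝ) (B : Matrix n n ℝ) (k : ι)
    (p : ℕ) : ∫ x, x k * (B * matrixSeries A x ^ (p + 1)).trace ∂centredGaussianPi w
      = w k * ∑ q ∈ antidiagonal p,
          ∫ x, (B * matrixSeries A x ^ q.1 * A k * matrixSeries A x ^ q.2).trace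
            ∂centredGaussianPi w := by
  have hstein := integral_eval_X_mul w k (B.map C * genericMatrixSeries A ^ (p + 1)).trace
  simp_rw [eval_X_mul_trace A B k, pderiv_trace_mul_genericMatrixSeries_pow A B k, map_sum,
    eval_trace_genericMatrixSeries A B (A k)] at hstein
  rw [hstein, integral_finsetSum _ fun q _ => integrable_trace_mul_pow_mul_pow w A B (A k) q.1 q.2]

theorem integral_trace_matrixSeries_pow (w : ι → ℝ≥0) (A : ι → Matrix n n ℝ) (p : ℕ) :
    ∫ x, (matrixSeries A x ^ (p + 2)).trace ∂centredGaussianPi w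
      = ∑ k, w k * ∑ q ∈ antidiagonal p,
          ∫ x, (A k * matrixSeries A x ^ q.1 * A k * matrixSeries A x ^ q.2).trace
            ∂centredGaussianPi w := by
  have hint (k : ι) : Integrable (fun x => x k * (A k * matrixSeries A x ^ (p + 1)).trace)
      (centredGaussianPi w) :=
    (integrable_eval_mvPolynomial w _).congr (ae_of_all _ (eval_X_mul_trace A (A k) k (p + 1)))
  simp only [← integral_mul_trace_mul_pow]
  rw [← integral_finsetSum _ fun k _ => hint k]
  congr with x
  nth_rw 1 [pow_succ', matrixSeries]
  simp only [Finset.sum_mul, trace_sum, smul_mul_assoc, trace_smul, smul_eq_mul]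

theorem integral_trace_even_pow_succ_le (w : ι → ℝ≥0) {A : ι → Matrix n n ℝ}
    (hA : ∀ k, (A k).IsHermitian) (p : ℕ) :
    ∫ x, (matrixSeries A x ^ (2 * (p + 1))).trace ∂centredGaussianPi w
      ≤ (2 * p + 1) * ‖∑ k, (w k : ℝ) • (A k * A k)‖
        * ∫ x, (matrixSeries A x ^ (2 * p)).trace ∂centredGaussianPi w := by
  have hX := isHermitian_matrixSeries hA
  calc ∫ x, (matrixSeries A x ^ (2 * (p + 1))).trace ∂centredGaussianPi w
      ≤ ∑ k, w k * ∑ _q ∈ antidiagonal (2 * p),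
          ∫ x, (A k * A k * matrixSeries A x ^ (2 * p)).trace ∂centredGaussianPi w := by
        rw [mul_add_one, integral_trace_matrixSeries_pow]
        gcongr with k _ q hq
        · exact integrable_trace_mul_pow_mul_pow w A (A k) (A k) q.1 q.2
        · exact integrable_trace_mul_pow w A (A k * A k) (2 * p)
        · intro x
          have hsum : q.1 + q.2 = 2 * p := Finset.HasAntidiagonal.mem_antidiagonal.1 hq
          rw [← hsum]
          exact trace_mul_pow_mul_pow_le (hA k) (hX x) (hsum ▸ even_two_mul p)
    _ = (2 * p + 1) * ∫ x, ((∑ k, (w k : ℝ) • (A k * A k)) * matrixSeries A x ^ (2 * p)).trace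
          ∂centredGaussianPi w := by
        simp only [Finset.sum_const, Finset.Nat.card_antidiagonal, Finset.sum_mul, trace_sum,
          smul_mul_assoc, trace_smul, smul_eq_mul, nsmul_eq_mul]
        rw [integral_finsetSum _ fun k _ =>
          (integrable_trace_mul_pow w A (A k * A k) (2 * p)).const_mul (w k : ℝ)]
        simp only [integral_const_mul, Finset.mul_sum, Nat.cast_add, Nat.cast_mul, Nat.cast_ofNat,
          Nat.cast_one, mul_left_comm]
    _ ≤ (2 * p + 1) * ∫ x, ‖∑ k, (w k : ℝ) • (A k * A k)‖ * (matrixSeries A x ^ (2 * p)).trace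
          ∂centredGaussianPi w := by
        gcongr
        · exact integrable_trace_mul_pow w A _ (2 * p)
        · simpa using (integrable_trace_mul_pow w A 1 (2 * p)).const_mul _
        · exact fun x => trace_mul_even_pow_le (hX x) _ p
    _ = (2 * p + 1) * ‖∑ k, (w k : ℝ) • (A k * A k)‖
        * ∫ x, (matrixSeries A x ^ (2 * p)).trace ∂centredGaussianPi w := by
        rw [integral_const_mul, mul_assoc]

theorem integral_trace_even_pow_le (w : ι → ℝ≥0) {A : ι → Matrix n n ℝ}
    (hA : ∀ k, (A k).IsHermitian) (p : ℕ) :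
    ∫ x, (matrixSeries A x ^ (2 * p)).trace ∂centredGaussianPi w
      ≤ (2 * p - 1)‼ * ‖∑ k, (w k : ℝ) • (A k * A k)‖ ^ p * Fintype.card n := by
  induction p with
  | zero => simp
  | succ p ih =>
    have hdouble : (2 * (p + 1) - 1)‼ = (2 * p + 1) * (2 * p - 1)‼ := Nat.doubleFactorial_add_one _
    calc _ ≤ _ := integral_trace_even_pow_succ_le w hA p
      _ ≤ (2 * p + 1) * ‖∑ k, (w k : ℝ) • (A k * A k)‖ *
          ((2 * p - 1)‼ * ‖∑ k, (w k : ℝ) • (A k * A k)‖ ^ p * Fintype.card n) := by gcongr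
      _ = _ := by
        rw [hdouble]
        push_cast
        ring

end TraceMoments

section DoubleFactorial

open scoped Nat

lemma factorial_eq_stirlingSeq_mul {n : ℕ} (hn : n ≠ 0) :
    (n ! : ℝ) = Stirling.stirlingSeq n * (√(2 * n) * (n / exp 1) ^ n) := by
  rw [Stirling.stirlingSeq, div_mul_cancel₀ _ (by positivity)]

lemma doubleFactorial_two_mul_sub_one_le (p : ℕ) :
    ((2 * p - 1)‼ : ℝ) ≤ √2 * (2 * p / exp 1) ^ p := by
  obtain _ | k := p
  · simp
  set p := k + 1
  have hstirling : Stirling.stirlingSeq (2 * p) ≤ Stirling.stirlingSeq p :=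
    Stirling.stirlingSeq'_antitone (show k ≤ 2 * k + 1 by lia)
  have hfactorial : ((2 * p)! : ℝ) = 2 ^ p * p ! * (2 * p - 1)‼ := by
    rw [show 2 * p = 2 * k + 1 + 1 by lia, Nat.factorial_eq_mul_doubleFactorial,
      show 2 * k + 1 + 1 = 2 * p by lia, Nat.doubleFactorial_two_mul]
    push_cast
    rfl
  have hsplit : √(2 * ↑(2 * p)) * (↑(2 * p) / exp 1) ^ (2 * p)
      = 2 ^ p * (√(2 * p) * (p / exp 1) ^ p) * (√2 * (2 * p / exp 1) ^ p) := by
    rw [Nat.cast_mul, Nat.cast_ofNat, Real.sqrt_mul zero_le_two (2 * (p : ℝ)), two_mul p, pow_add]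
    nth_rw 1 [mul_div_assoc, mul_pow]
    ring
  refine le_of_mul_le_mul_left (a := 2 ^ p * (p ! : ℝ)) ?_ (by positivity)
  calc 2 ^ p * (p ! : ℝ) * (2 * p - 1)‼
      = Stirling.stirlingSeq (2 * p) * (√(2 * ↑(2 * p)) * (↑(2 * p) / exp 1) ^ (2 * p)) := by
        rw [← hfactorial, factorial_eq_stirlingSeq_mul (by lia)]
    _ ≤ Stirling.stirlingSeq p * (√(2 * ↑(2 * p)) * (↑(2 * p) / exp 1) ^ (2 * p)) := by gcongr
    _ = 2 ^ p * (p ! : ℝ) * (√2 * (2 * p / exp 1) ^ p) := by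
        rw [hsplit, factorial_eq_stirlingSeq_mul (by lia : p ≠ 0)]; ring

-- With `L = log N` and `√2 ≤ exp (1 / 2)`, the `p`-th root of the bound
-- `√2 * (2 * p / exp 1) ^ p * N` for `(2 * p - 1)‼ * N` is at most twice the left-hand side.
lemma exp_div_sub_one_mul_le {L p : ℝ} (hp : 1 ≤ p) (hLp : L ≤ p) (hpL : p ≤ L + 1) :
    exp ((L + 1 / 2) / p - 1) * p ≤ L + 1 := by
  set y := (L + 1 / 2) / p
  have hy : y * p = L + 1 / 2 := div_mul_cancel₀ _ (by positivity)
  have hp_le : p ≤ (2 - y) * (L + 1) := by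
    refine le_of_mul_le_mul_right ?_ (zero_lt_one.trans_le hp)
    calc p * p ≤ (2 * p - (L + 1 / 2)) * (L + 1) := by
          nlinarith [mul_nonneg (sub_nonneg.2 hLp) (sub_nonneg.2 hpL)]
      _ = (2 - y) * (L + 1) * p := by rw [← hy]; ring
  have hexp : exp (y - 1) * (2 - y) ≤ 1 := by
    calc exp (y - 1) * (2 - y) ≤ exp (y - 1) * exp (1 - y) := by
          gcongr
          linarith [add_one_le_exp (1 - y)]
      _ = 1 := by rw [← exp_add]; simp
  calc exp (y - 1) * p ≤ exp (y - 1) * ((2 - y) * (L + 1)) := by gcongr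
    _ = exp (y - 1) * (2 - y) * (L + 1) := by ring
    _ ≤ 1 * (L + 1) := by gcongr; linarith
    _ = L + 1 := one_mul _

lemma exists_doubleFactorial_mul_le_log_pow {N : ℝ} (hN : 1 ≤ N) :
    ∃ p : ℕ, p ≠ 0 ∧ (2 * p - 1)‼ * N ≤ (2 * log (exp 1 * N)) ^ p := by
  have hN0 : 0 < N := by positivity
  set L := log N
  set p := ⌊L⌋₊ + 1
  have hp : (p : ℝ) = ⌊L⌋₊ + 1 := by simp only [p, Nat.cast_add_one]
  have hp0 : (p : ℝ) ≠ 0 := by positivity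
  have hscale := exp_div_sub_one_mul_le (L := L) (p := p) (by simp [hp])
    (hp ▸ (Nat.lt_floor_add_one L).le) (by rw [hp]; gcongr; exact Nat.floor_le (log_nonneg hN))
  have hsqrt : √2 ≤ exp (1 / 2) := by
    rw [exp_half]
    exact sqrt_le_sqrt (by linarith [add_one_le_exp 1])
  refine ⟨p, Nat.succ_ne_zero _, ?_⟩
  calc (2 * p - 1)‼ * N ≤ exp (1 / 2) * (2 * p / exp 1) ^ p * exp L := by
        rw [exp_log hN0]
        gcongr
        exact (doubleFactorial_two_mul_sub_one_le p).trans (by gcongr)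
    _ = (2 * (exp ((L + 1 / 2) / p - 1) * p)) ^ p := by
        rw [div_pow, mul_pow, mul_pow, mul_pow, ← exp_nat_mul, ← exp_nat_mul, mul_sub,
          mul_div_cancel₀ _ hp0, exp_sub, exp_add]
        ring
    _ ≤ (2 * (L + 1)) ^ p := by gcongr
    _ = (2 * log (exp 1 * N)) ^ p := by
        rw [log_mul (exp_pos 1).ne' hN0.ne', log_exp, add_comm]

lemma log_exp_one_mul_nonneg {N : ℝ} (hN : 1 ≤ N) : 0 ≤ log (exp 1 * N) :=
  log_nonneg (one_le_mul_of_one_le_of_one_le (one_le_exp zero_le_one) hN)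

end DoubleFactorial

section SpectralNorm

open Matrix
open scoped NNReal Nat Matrix.Norms.L2Operator

variable {ι m n : Type*} [Fintype ι] [Fintype m] [Fintype n] [DecidableEq n]

lemma memLp_matrixSeries (w : ι → ℝ≥0) (A : ι → Matrix m n ℝ) (p : ℝ≥0) :
    MemLp (matrixSeries A) p (centredGaussianPi w) := by
  refine memLp_finsetSum _ fun k _ => ?_
  have hcoord : MemLp (fun x : ι → ℝ => x k) p (centredGaussianPi w) :=
    (memLp_id_gaussianReal p).comp_measurePreserving
      (measurePreserving_eval (fun k => gaussianReal 0 (w k)) k)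
  exact ((ContinuousLinearMap.id ℝ ℝ).smulRight (A k)).comp_memLp' hcoord

lemma integrable_norm_matrixSeries_pow (w : ι → ℝ≥0) (A : ι → Matrix m n ℝ) (p : ℕ) :
    Integrable (fun x => ‖matrixSeries A x‖ ^ p) (centredGaussianPi w) :=
  (memLp_matrixSeries w A p).integrable_norm_pow'

theorem integral_norm_sq_matrixSeries_le_of_isHermitian [Nonempty n] (w : ι → ℝ≥0)
    {A : ι → Matrix n n ℝ} (hA : ∀ k, (A k).IsHermitian) :
    ∫ x, ‖matrixSeries A x‖ ^ 2 ∂centredGaussianPi w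
      ≤ 2 * log (exp 1 * Fintype.card n) * ‖∑ k, (w k : ℝ) • (A k * A k)‖ := by
  have hcard : (1 : ℝ) ≤ Fintype.card n := by exact_mod_cast Fintype.card_pos
  have hlog := log_exp_one_mul_nonneg hcard
  obtain ⟨p, hp, hdouble⟩ := exists_doubleFactorial_mul_le_log_pow hcard
  refine le_of_pow_le_pow_left₀ hp (by positivity) ?_
  calc (∫ x, ‖matrixSeries A x‖ ^ 2 ∂centredGaussianPi w) ^ p
      ≤ ∫ x, (‖matrixSeries A x‖ ^ 2) ^ p ∂centredGaussianPi w :=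
        (convexOn_pow p).map_integral_le (continuousOn_pow p) isClosed_Ici
          (ae_of_all _ fun x => sq_nonneg ‖matrixSeries A x‖)
          (integrable_norm_matrixSeries_pow w A 2)
          (by simpa only [Function.comp_def, ← pow_mul]
            using integrable_norm_matrixSeries_pow w A (2 * p))
    _ ≤ ∫ x, (matrixSeries A x ^ (2 * p)).trace ∂centredGaussianPi w := by
        simp only [← pow_mul]
        refine integral_mono (integrable_norm_matrixSeries_pow w A (2 * p))
          (by simpa using integrable_trace_mul_pow w A 1 (2 * p))
          fun x => norm_pow_even_le_trace (isHermitian_matrixSeries hA x) hp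
    _ ≤ (2 * p - 1)‼ * ‖∑ k, (w k : ℝ) • (A k * A k)‖ ^ p * Fintype.card n :=
        integral_trace_even_pow_le w hA p
    _ = (2 * p - 1)‼ * Fintype.card n * ‖∑ k, (w k : ℝ) • (A k * A k)‖ ^ p := mul_right_comm _ _ _
    _ ≤ (2 * log (exp 1 * Fintype.card n) * ‖∑ k, (w k : ℝ) • (A k * A k)‖) ^ p := by
        rw [mul_pow _ ‖_‖]
        gcongr

end SpectralNorm

section BlockNorm

open Matrix
open scoped Matrix.Norms.L2Operator

variable {m n m' n' 𝕜 : Type*} [Fintype m] [Fintype n] [Fintype m'] [Fintype n'] [RCLike 𝕜]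

lemma norm_sq_toLp_sumElim (x : m → 𝕜) (y : n → 𝕜) :
    ‖WithLp.toLp 2 (Sum.elim x y)‖ ^ 2 = ‖WithLp.toLp 2 x‖ ^ 2 + ‖WithLp.toLp 2 y‖ ^ 2 := by
  simp only [EuclideanSpace.norm_sq_eq, Fintype.sum_sum_type, Sum.elim_inl, Sum.elim_inr]

variable [DecidableEq n]

lemma norm_sq_toLp_mulVec_le (A : Matrix m n 𝕜) (x : n → 𝕜) :
    ‖WithLp.toLp 2 (A *ᵥ x)‖ ^ 2 ≤ ‖A‖ ^ 2 * ‖WithLp.toLp 2 x‖ ^ 2 := by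
  rw [← mul_pow]
  gcongr
  exact l2_opNorm_mulVec A (WithLp.toLp 2 x)

lemma l2_opNorm_le_of_norm_sq_mulVec_le {A : Matrix m n 𝕜} {c : ℝ} (hc : 0 ≤ c)
    (h : ∀ x, ‖WithLp.toLp 2 (A *ᵥ x)‖ ^ 2 ≤ c ^ 2 * ‖WithLp.toLp 2 x‖ ^ 2) : ‖A‖ ≤ c := by
  rw [l2_opNorm_def]
  refine ContinuousLinearMap.opNorm_le_bound _ hc fun x => ?_
  refine le_of_sq_le_sq ?_ (by positivity)
  rw [mul_pow]
  exact h x.ofLp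

variable [DecidableEq n']

lemma norm_le_norm_fromBlocks₁₂ (A : Matrix m n 𝕜) (B : Matrix m n' 𝕜)
    (C : Matrix m' n 𝕜) (D : Matrix m' n' 𝕜) : ‖B‖ ≤ ‖fromBlocks A B C D‖ := by
  refine l2_opNorm_le_of_norm_sq_mulVec_le (norm_nonneg _) fun x => ?_
  calc ‖WithLp.toLp 2 (B *ᵥ x)‖ ^ 2
      ≤ ‖WithLp.toLp 2 (B *ᵥ x)‖ ^ 2 + ‖WithLp.toLp 2 (D *ᵥ x)‖ ^ 2 :=
        le_add_of_nonneg_right (sq_nonneg _)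
    _ = ‖WithLp.toLp 2 (fromBlocks A B C D *ᵥ Sum.elim (0 : n → 𝕜) x)‖ ^ 2 := by
        simp [fromBlocks_mulVec, norm_sq_toLp_sumElim]
    _ ≤ ‖fromBlocks A B C D‖ ^ 2 * ‖WithLp.toLp 2 (Sum.elim (0 : n → 𝕜) x)‖ ^ 2 :=
        norm_sq_toLp_mulVec_le _ _
    _ = ‖fromBlocks A B C D‖ ^ 2 * ‖WithLp.toLp 2 x‖ ^ 2 := by
        simp [norm_sq_toLp_sumElim]

lemma norm_fromBlocks_diagonal_le (A : Matrix m n 𝕜) (D : Matrix m' n' 𝕜) :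
    ‖fromBlocks A 0 0 D‖ ≤ max ‖A‖ ‖D‖ := by
  refine l2_opNorm_le_of_norm_sq_mulVec_le (by positivity) fun x => ?_
  calc ‖WithLp.toLp 2 (fromBlocks A 0 0 D *ᵥ x)‖ ^ 2
      = ‖WithLp.toLp 2 (A *ᵥ (x ∘ Sum.inl))‖ ^ 2 + ‖WithLp.toLp 2 (D *ᵥ (x ∘ Sum.inr))‖ ^ 2 := by
        simp [fromBlocks_mulVec, norm_sq_toLp_sumElim]
    _ ≤ max ‖A‖ ‖D‖ ^ 2 * ‖WithLp.toLp 2 (x ∘ Sum.inl)‖ ^ 2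
        + max ‖A‖ ‖D‖ ^ 2 * ‖WithLp.toLp 2 (x ∘ Sum.inr)‖ ^ 2 := by
        gcongr
        · exact (norm_sq_toLp_mulVec_le _ _).trans (by gcongr; exact le_max_left _ _)
        · exact (norm_sq_toLp_mulVec_le _ _).trans (by gcongr; exact le_max_right _ _)
    _ = max ‖A‖ ‖D‖ ^ 2 * ‖WithLp.toLp 2 x‖ ^ 2 := by
        rw [← mul_add, ← norm_sq_toLp_sumElim, Sum.elim_comp_inl_inr]

end BlockNorm

section HermitianDilation

open Matrix
open scoped NNReal Matrix.Norms.L2Operator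

lemma one_le_card_add_card {m n : Type*} [Fintype m] [Fintype n] [Nonempty (m ⊕ n)] :
    (1 : ℝ) ≤ Fintype.card m + Fintype.card n := by
  exact_mod_cast Fintype.card_sum (α := m) (β := n) ▸ Fintype.card_pos (α := m ⊕ n)

variable {ι m n R : Type*} [CommSemiring R] [StarRing R]

/-- The Hermitian dilation `[0, B; Bᴴ, 0]` of a rectangular matrix `B`. It reduces norm bounds for
rectangular random matrices to the Hermitian case. -/
def hermitianDilation (B : Matrix m n R) : Matrix (m ⊕ n) (m ⊕ n) R := fromBlocks 0 B Bᴴ 0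

lemma isHermitian_hermitianDilation (B : Matrix m n R) : (hermitianDilation B).IsHermitian :=
  isHermitian_zero.fromBlocks rfl isHermitian_zero

variable [Fintype ι]

lemma hermitianDilation_matrixSeries [TrivialStar R] (B : ι → Matrix m n R) (x : ι → R) :
    hermitianDilation (matrixSeries B x) = matrixSeries (fun k => hermitianDilation (B k)) x := by
  ext (i | i) (j | j) <;> simp [hermitianDilation, matrixSeries, Matrix.sum_apply]

variable [Fintype m] [Fintype n]

lemma hermitianDilation_mul_self (B : Matrix m n R) :
    hermitianDilation B * hermitianDilation B = fromBlocks (B * Bᴴ) 0 0 (Bᴴ * B) := by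
  simp [hermitianDilation, fromBlocks_multiply]

lemma sum_smul_hermitianDilation_mul_self (w : ι → R) (B : ι → Matrix m n R) :
    ∑ k, w k • (hermitianDilation (B k) * hermitianDilation (B k))
      = fromBlocks (∑ k, w k • (B k * (B k)ᴴ)) 0 0 (∑ k, w k • ((B k)ᴴ * B k)) := by
  ext (i | i) (j | j) <;> simp [hermitianDilation_mul_self, Matrix.sum_apply]

variable [DecidableEq m] [DecidableEq n]

theorem integral_norm_sq_matrixSeries_le [Nonempty (m ⊕ n)] (w : ι → ℝ≥0) (B : ι → Matrix m n ℝ) :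
    ∫ x, ‖matrixSeries B x‖ ^ 2 ∂centredGaussianPi w
      ≤ 2 * log (exp 1 * (Fintype.card m + Fintype.card n)) *
        max ‖∑ k, (w k : ℝ) • (B k * (B k)ᴴ)‖ ‖∑ k, (w k : ℝ) • ((B k)ᴴ * B k)‖ := by
  have hlog := log_exp_one_mul_nonneg (one_le_card_add_card (m := m) (n := n))
  calc ∫ x, ‖matrixSeries B x‖ ^ 2 ∂centredGaussianPi w
      ≤ ∫ x, ‖matrixSeries (fun k => hermitianDilation (B k)) x‖ ^ 2 ∂centredGaussianPi w := by
        refine integral_mono (integrable_norm_matrixSeries_pow w B 2)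
          (integrable_norm_matrixSeries_pow w _ 2) fun x => ?_
        dsimp only
        rw [← hermitianDilation_matrixSeries]
        gcongr
        exact norm_le_norm_fromBlocks₁₂ _ _ _ _
    _ ≤ 2 * log (exp 1 * Fintype.card (m ⊕ n)) *
        ‖∑ k, (w k : ℝ) • (hermitianDilation (B k) * hermitianDilation (B k))‖ :=
        integral_norm_sq_matrixSeries_le_of_isHermitian w fun k => isHermitian_hermitianDilation _
    _ ≤ _ := by
        rw [sum_smul_hermitianDilation_mul_self, Fintype.card_sum, Nat.cast_add]
        gcongr
        exact norm_fromBlocks_diagonal_le _ _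

end HermitianDilation

section IndependentEntries

open Matrix
open scoped NNReal Matrix.Norms.L2Operator

section Series

variable {m n R : Type*} [Fintype m] [Fintype n] [DecidableEq m] [DecidableEq n]

lemma matrixSeries_single [CommSemiring R] (x : m × n → R) :
    matrixSeries (fun p : m × n => single p.1 p.2 1) x = of fun i j => x (i, j) := by
  ext i j
  simp [matrixSeries, Matrix.sum_apply, Fintype.sum_prod_type, single_apply, ite_and]

lemma sum_smul_single_mul_conjTranspose [CommSemiring R] [StarRing R] (w : m × n → R) :
    ∑ p : m × n, w p • (single p.1 p.2 (1 : R) * (single p.1 p.2 (1 : R))ᴴ)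
      = diagonal fun i => ∑ j, w (i, j) := by
  ext i j
  rcases eq_or_ne i j with rfl | hij <;>
    simp [Matrix.sum_apply, Fintype.sum_prod_type_right, single_apply, ite_and, *]

lemma sum_smul_conjTranspose_single_mul [CommSemiring R] [StarRing R] (w : m × n → R) :
    ∑ p : m × n, w p • ((single p.1 p.2 (1 : R))ᴴ * single p.1 p.2 (1 : R))
      = diagonal fun j => ∑ i, w (i, j) := by
  ext i j
  rcases eq_or_ne i j with rfl | hij <;>
    simp [Matrix.sum_apply, Fintype.sum_prod_type, single_apply, ite_and, *]

end Series

variable {m n : Type*} [Fintype m] [Fintype n]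

lemma l2_opNorm_diagonal_le [DecidableEq n] {d : n → ℝ} {s : ℝ} (hs : 0 ≤ s)
    (h0 : ∀ i, 0 ≤ d i) (h : ∀ i, d i ≤ s) : ‖diagonal d‖ ≤ s := by
  rw [l2_opNorm_diagonal, pi_norm_le_iff_of_nonneg hs]
  exact fun i => (abs_of_nonneg (h0 i)).trans_le (h i)

lemma nonneg_of_row_col_sums_le [Nonempty (m ⊕ n)] {v : m → n → ℝ≥0} {s : ℝ}
    (hrow : ∀ i, ∑ j, (v i j : ℝ) ≤ s) (hcol : ∀ j, ∑ i, (v i j : ℝ) ≤ s) : 0 ≤ s := by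
  obtain ⟨i | j⟩ := ‹Nonempty (m ⊕ n)›
  · exact (Finset.sum_nonneg fun j _ => (v i j).coe_nonneg).trans (hrow i)
  · exact (Finset.sum_nonneg fun i _ => (v i j).coe_nonneg).trans (hcol j)

variable [DecidableEq n]

lemma memLp_of_entries (w : m × n → ℝ≥0) (p : ℝ≥0) :
    MemLp (fun x : m × n → ℝ => of fun i j => x (i, j)) p (centredGaussianPi w) := by
  classical
  simpa only [← matrixSeries_single] using memLp_matrixSeries w (fun p => single p.1 p.2 1) p

theorem integral_norm_sq_of_entries_le [Nonempty (m ⊕ n)] {v : m → n → ℝ≥0} {s : ℝ}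
    (hrow : ∀ i, ∑ j, (v i j : ℝ) ≤ s) (hcol : ∀ j, ∑ i, (v i j : ℝ) ≤ s) :
    ∫ x : m × n → ℝ, ‖of fun i j => x (i, j)‖ ^ 2 ∂centredGaussianPi (fun p => v p.1 p.2)
      ≤ 2 * log (exp 1 * (Fintype.card m + Fintype.card n)) * s := by
  classical
  have hs := nonneg_of_row_col_sums_le hrow hcol
  have hlog := log_exp_one_mul_nonneg (one_le_card_add_card (m := m) (n := n))
  have hbound := integral_norm_sq_matrixSeries_le (fun p : m × n => v p.1 p.2)
    (fun p => single p.1 p.2 1)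
  rw [sum_smul_single_mul_conjTranspose fun p : m × n => (v p.1 p.2 : ℝ),
    sum_smul_conjTranspose_single_mul fun p : m × n => (v p.1 p.2 : ℝ)] at hbound
  simp only [matrixSeries_single] at hbound
  refine hbound.trans ?_
  gcongr
  exact max_le (l2_opNorm_diagonal_le hs (fun i => by positivity) hrow)
    (l2_opNorm_diagonal_le hs (fun j => by positivity) hcol)

end IndependentEntries

section Mean

open Matrix
open scoped NNReal Matrix.Norms.L2Operator

lemma measurePreserving_add_pi_gaussianReal {ι : Type*} [Fintype ι] (μ : ι → ℝ) (w : ι → ℝ≥0) :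
    MeasurePreserving (· + μ) (centredGaussianPi w)
      (Measure.pi fun k => gaussianReal (μ k) (w k)) :=
  measurePreserving_pi _ _ fun k =>
    ⟨measurable_add_const (μ k), by rw [gaussianReal_map_add_const, zero_add]⟩

lemma sqrt_integral_norm_add_const_sq_le {Ω E : Type*} [MeasurableSpace Ω] {P : Measure Ω}
    [IsProbabilityMeasure P] [NormedAddCommGroup E] {X : Ω → E} (hX : MemLp X 2 P) (c : E) :
    √(∫ ω, ‖X ω + c‖ ^ 2 ∂P) ≤ ‖c‖ + √(∫ ω, ‖X ω‖ ^ 2 ∂P) := by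
  have hsqrt {Y : Ω → E} (hY : MemLp Y 2 P) : lpNorm Y 2 P = √(∫ ω, ‖Y ω‖ ^ 2 ∂P) := by
    rw [lpNorm_eq_integral_norm_rpow_toReal two_ne_zero ENNReal.ofNat_ne_top
      hY.aestronglyMeasurable]
    simp [sqrt_eq_rpow]
  have hc : lpNorm (fun _ : Ω => c) 2 P = ‖c‖ := by
    rw [lpNorm_const two_ne_zero (NeZero.ne P)]
    simp
  calc √(∫ ω, ‖X ω + c‖ ^ 2 ∂P) = lpNorm (X + fun _ => c) 2 P :=
        (hsqrt (hX.add (memLp_const c))).symm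
    _ ≤ lpNorm X 2 P + lpNorm (fun _ => c) 2 P := lpNorm_add_le hX one_le_two
    _ = ‖c‖ + √(∫ ω, ‖X ω‖ ^ 2 ∂P) := by rw [hsqrt hX, hc, add_comm]

variable {m n : Type*} [Fintype m] [Fintype n] [DecidableEq n]

theorem expected_gaussian_spectral_norm_general [Nonempty (m ⊕ n)] (M : Matrix m n ℝ)
    {v : m → n → ℝ} (hv : ∀ i j, 0 ≤ v i j) {s : ℝ}
    (hrow : ∀ i, ∑ j, v i j ≤ s) (hcol : ∀ j, ∑ i, v i j ≤ s) :
    √(∫ A : m × n → ℝ, ‖of fun i j => A (i, j)‖ ^ 2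
        ∂Measure.pi fun p => gaussianReal (M p.1 p.2) (v p.1 p.2).toNNReal)
      ≤ ‖M‖ + √(2 * log (exp 1 * (Fintype.card m + Fintype.card n))) * √s := by
  lift v to m → n → ℝ≥0 using hv
  simp only [Real.toNNReal_coe]
  have hs := nonneg_of_row_col_sums_le hrow hcol
  have hshift := measurePreserving_add_pi_gaussianReal (fun p : m × n => M p.1 p.2)
    fun p => v p.1 p.2
  calc _ = √(∫ A : m × n → ℝ, ‖of (fun i j => A (i, j)) + M‖ ^ 2
        ∂centredGaussianPi (fun p => v p.1 p.2)) := by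
        rw [← hshift.integral_comp (MeasurableEquiv.addRight _).measurableEmbedding]
        rfl
    _ ≤ ‖M‖ + √(∫ A : m × n → ℝ, ‖of fun i j => A (i, j)‖ ^ 2
        ∂centredGaussianPi (fun p => v p.1 p.2)) :=
        sqrt_integral_norm_add_const_sq_le (memLp_of_entries _ 2) M
    _ ≤ ‖M‖ + √(2 * log (exp 1 * (Fintype.card m + Fintype.card n))) * √s := by
        rw [← Real.sqrt_mul' _ hs]
        gcongr
        exact integral_norm_sq_of_entries_le hrow hcol

end Mean

section SpecNorm

open scoped Matrix.Norms.L2Operator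

lemma specNorm_eq_norm {m : ℕ} (A : Matrix (Fin m) (Fin m) ℝ) : specNorm A = ‖A‖ := rfl

end SpecNorm

/-- **Expected Gaussian spectral norms.**  If `G` is an `m × m` random matrix with
independent Gaussian entries `g_{ij} ∼ N(m_{ij}, v_{ij})`, then
`√(E‖G‖₂²) ≤ ‖M‖₂ + √(2 log(2em)) √v`, where `M = (m_{ij})` and
`v = max(maxᵢ Σⱼ v_{ij}, maxⱼ Σᵢ v_{ij})`. -/
theorem expected_gaussian_spectral_norm
    (m : ℕ) (hm : 1 ≤ m)
    (M : Matrix (Fin m) (Fin m) ℝ) (v : Fin m → Fin m → ℝ) (hv : ∀ i j, 0 ≤ v i j) :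
    Real.sqrt (∫ A : Fin m × Fin m → ℝ,
        (specNorm (Matrix.of fun i j => A (i, j)))^2
        ∂(Measure.pi fun p : Fin m × Fin m => gaussianReal (M p.1 p.2) (v p.1 p.2).toNNReal))
      ≤ specNorm M +
        Real.sqrt (2 * Real.log (2 * Real.exp 1 * m)) *
          Real.sqrt
            (max
              (Finset.univ.sup' (Finset.univ_nonempty_iff.mpr ⟨⟨0, hm⟩⟩)
                (fun i => ∑ j, v i j))
              (Finset.univ.sup' (Finset.univ_nonempty_iff.mpr ⟨⟨0, hm⟩⟩)
                (fun j => ∑ i, v i j))) := by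
  have : Nonempty (Fin m ⊕ Fin m) := ⟨.inl ⟨0, hm⟩⟩
  simpa only [← specNorm_eq_norm, Fintype.card_fin, ← two_mul, mul_left_comm, mul_assoc]
    using expected_gaussian_spectral_norm_general M hv
      (fun i => le_max_of_le_left (Finset.le_sup' (fun i => ∑ j, v i j) (Finset.mem_univ i)))
      fun j => le_max_of_le_right (Finset.le_sup' (fun j => ∑ i, v i j) (Finset.mem_univ j))
end

section
/- For every real a > 0 and every b ≥ 0, ∫₀^a sqrt( log( s + 1/s ) + b ) ds ≤ a · sqrt( log( a + 1/a ) + 1 + b ). -/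
open MeasureTheory Real

/-! Jensen's inequality for the concave square root gives `∫₀ᵃ √f ≤ √(a ∫₀ᵃ f)`, here with
`f s = log (s + 1/s) + b`, which is nonnegative because `s + 1/s ≥ 2`.
Since `log (s + 1/s) = log (s² + 1) - log s`, the integral of `f` is
`a log (a + 1/a) - a + 2 arctan a + b a`, and `arctan a ≤ a`. -/

lemma sqrt_mul_mul_self_left {c : ℝ} (hc : 0 ≤ c) (x : ℝ) : √(c * (c * x)) = c * √x := by
  rw [← mul_assoc, sqrt_mul (mul_self_nonneg c), sqrt_mul_self hc]

section Jensen

variable {α : Type*} [MeasurableSpace α] {μ : Measure α} [IsFiniteMeasure μ] {f : α → ℝ}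

lemma integrable_sqrt (hf : Integrable f μ) : Integrable (fun x ↦ √(f x)) μ := by
  refine (hf.abs.add (integrable_const 1)).mono'
    (continuous_sqrt.comp_aestronglyMeasurable hf.aestronglyMeasurable) (ae_of_all _ fun x ↦ ?_)
  rw [norm_of_nonneg (sqrt_nonneg _), Pi.add_apply]
  refine sqrt_le_iff.mpr ⟨by positivity, ?_⟩
  nlinarith [le_abs_self (f x), abs_nonneg (f x)]

lemma integral_sqrt_le_sqrt_measureReal_univ_mul_integral
    (hf : Integrable f μ) (hf_nonneg : 0 ≤ᵐ[μ] f) :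
    ∫ x, √(f x) ∂μ ≤ √(μ.real Set.univ * ∫ x, f x ∂μ) := by
  rcases eq_zero_or_neZero μ with rfl | _
  · simp
  have jensen : ⨍ x, √(f x) ∂μ ≤ √(⨍ x, f x ∂μ) :=
    strictConcaveOn_sqrt.concaveOn.le_map_average continuous_sqrt.continuousOn isClosed_Ici
      hf_nonneg hf (integrable_sqrt hf)
  calc ∫ x, √(f x) ∂μ
      = μ.real Set.univ * ⨍ x, √(f x) ∂μ := (measure_smul_average μ _).symm
    _ ≤ μ.real Set.univ * √(⨍ x, f x ∂μ) := by gcongr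
    _ = √(μ.real Set.univ * (μ.real Set.univ * ⨍ x, f x ∂μ)) :=
      (sqrt_mul_mul_self_left measureReal_nonneg _).symm
    _ = √(μ.real Set.univ * ∫ x, f x ∂μ) := by
      rw [← smul_eq_mul _ (⨍ x, f x ∂μ), measure_smul_average]

end Jensen

lemma arctan_le_self {x : ℝ} (hx : 0 ≤ x) : arctan x ≤ x := by
  simpa only [tan_arctan] using le_tan (arctan_nonneg.mpr hx) (arctan_lt_pi_div_two x)

lemma log_self_add_inv (x : ℝ) : log (x + x⁻¹) = log (x ^ 2 + 1) - log x := by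
  rcases eq_or_ne x 0 with rfl | hx
  · simp
  rw [← log_div (by positivity) hx]
  congr 1
  field_simp

lemma log_two_le_log_self_add_inv {x : ℝ} (hx : 0 < x) : log 2 ≤ log (x + x⁻¹) := by
  refine log_le_log two_pos ?_
  have sq_div_eq : (x - 1) ^ 2 / x = x + x⁻¹ - 2 := by field_simp; ring
  have sq_div_nonneg : 0 ≤ (x - 1) ^ 2 / x := by positivity
  linarith

lemma continuous_log_sq_add_one : Continuous fun x : ℝ ↦ log (x ^ 2 + 1) :=
  Continuous.log (by fun_prop) fun x ↦ by positivity

lemma intervalIntegrable_log_self_add_inv (a b : ℝ) :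
    IntervalIntegrable (fun x ↦ log (x + x⁻¹)) volume a b := by
  simp only [log_self_add_inv]
  exact (continuous_log_sq_add_one.intervalIntegrable a b).sub
    intervalIntegral.intervalIntegrable_log'

lemma hasDerivAt_log_sq_add_one_primitive (x : ℝ) :
    HasDerivAt (fun x ↦ x * log (x ^ 2 + 1) - 2 * x + 2 * arctan x) (log (x ^ 2 + 1)) x := by
  have hlog : HasDerivAt (fun x : ℝ ↦ log (x ^ 2 + 1)) (2 * x / (x ^ 2 + 1)) x := by
    simpa using ((hasDerivAt_pow 2 x).add_const 1).log (by positivity)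
  refine ((((hasDerivAt_id' x).mul hlog).sub ((hasDerivAt_id' x).const_mul 2)).add
    ((hasDerivAt_arctan x).const_mul 2)).congr_deriv ?_
  field_simp
  ring

lemma integral_log_sq_add_one (a b : ℝ) :
    ∫ x in a..b, log (x ^ 2 + 1) =
      b * log (b ^ 2 + 1) - a * log (a ^ 2 + 1) - 2 * (b - a) + 2 * (arctan b - arctan a) := by
  rw [intervalIntegral.integral_eq_sub_of_hasDerivAt
    (fun x _ ↦ hasDerivAt_log_sq_add_one_primitive x)
    (continuous_log_sq_add_one.intervalIntegrable a b)]
  ring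

lemma integral_log_self_add_inv (a b : ℝ) :
    ∫ x in a..b, log (x + x⁻¹) =
      b * log (b + b⁻¹) - a * log (a + a⁻¹) - (b - a) + 2 * (arctan b - arctan a) := by
  simp only [log_self_add_inv]
  rw [intervalIntegral.integral_sub (continuous_log_sq_add_one.intervalIntegrable a b)
    intervalIntegral.intervalIntegrable_log', integral_log_sq_add_one, integral_log]
  ring

lemma integral_log_self_add_inv_le {a : ℝ} (ha : 0 ≤ a) :
    ∫ x in 0..a, log (x + x⁻¹) ≤ a * (log (a + a⁻¹) + 1) := by
  rw [integral_log_self_add_inv, arctan_zero]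
  linarith [arctan_le_self ha]

theorem integral_sqrt_log_self_add_inv_le_general (a b : ℝ) (ha : 0 < a) (hb : -log 2 ≤ b) :
    ∫ s in Set.Ioo (0 : ℝ) a, √(log (s + 1 / s) + b) ≤ a * √(log (a + 1 / a) + 1 + b) := by
  simp only [one_div]
  have integrableOn_log_add : IntegrableOn (fun s ↦ log (s + s⁻¹) + b) (Set.Ioo 0 a) :=
    (intervalIntegrable_iff_integrableOn_Ioo_of_le ha.le).mp
      ((intervalIntegrable_log_self_add_inv 0 a).add intervalIntegrable_const)
  have log_add_nonneg : ∀ᵐ s ∂volume.restrict (Set.Ioo 0 a), 0 ≤ log (s + s⁻¹) + b :=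
    ae_restrict_of_forall_mem measurableSet_Ioo fun s hs ↦ by
      linarith [log_two_le_log_self_add_inv hs.1]
  have integral_le : ∫ s in Set.Ioo 0 a, (log (s + s⁻¹) + b) ≤ a * (log (a + a⁻¹) + 1 + b) := by
    rw [← integral_Ioc_eq_integral_Ioo, ← intervalIntegral.integral_of_le ha.le,
      intervalIntegral.integral_add (intervalIntegrable_log_self_add_inv 0 a)
        intervalIntegrable_const, intervalIntegral.integral_const, smul_eq_mul]
    linarith [integral_log_self_add_inv_le ha.le]
  calc ∫ s in Set.Ioo 0 a, √(log (s + s⁻¹) + b)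
      ≤ √(a * ∫ s in Set.Ioo 0 a, (log (s + s⁻¹) + b)) := by
        simpa [ha.le] using integral_sqrt_le_sqrt_measureReal_univ_mul_integral
          integrableOn_log_add log_add_nonneg
    _ ≤ √(a * (a * (log (a + a⁻¹) + 1 + b))) := by gcongr
    _ = a * √(log (a + a⁻¹) + 1 + b) := sqrt_mul_mul_self_left ha.le _

/-- For every `a > 0` and `b ≥ 0`,
`∫₀^a √(log(s + 1/s) + b) ds ≤ a √(log(a + 1/a) + 1 + b)`. -/
theorem integral_sqrt_log_self_add_inv_le (a b : ℝ) (ha : 0 < a) (hb : 0 ≤ b) :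
    ∫ s in Set.Ioo (0:ℝ) a, Real.sqrt (Real.log (s + 1/s) + b) ≤
      a * Real.sqrt (Real.log (a + 1/a) + 1 + b) :=
  integral_sqrt_log_self_add_inv_le_general a b ha (by linarith [log_pos one_lt_two])
end

section
/- Let d ≥ 1, let Λ be a symmetric positive semidefinite d × d real matrix, let Σ be a symmetric positive definite d × d real matrix, and let v ∈ ℝ^d. Then vᵀ Λ v ≤ trace(ΛΣ) · ( vᵀ Σ^{−1} v ). -/
/-!
A positive semidefinite `A` satisfies `A ≤ tr A • 1` in the Loewner order, since each of its
eigenvalues is at most their sum. Apply this to `B * L * Bᴴ`, where `S = Bᴴ * B`, and conjugate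
by `B`: this gives `S * L * S ≤ tr (L * S) • S`. For invertible `S`, conjugating by `S⁻¹` yields
`L ≤ tr (L * S) • S⁻¹`, which is then evaluated at `v`.
-/

open Matrix

section Loewner

open scoped ComplexOrder MatrixOrder

variable {n 𝕜 : Type*} [Fintype n] [RCLike 𝕜] {A L S : Matrix n n 𝕜}

theorem eigenvalues_le_re_trace [DecidableEq n] (hA : A.PosSemidef) (i : n) :
    hA.isHermitian.eigenvalues i ≤ RCLike.re A.trace := by
  rw [hA.isHermitian.trace_eq_sum_eigenvalues, ← RCLike.ofReal_sum, RCLike.ofReal_re]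
  exact Finset.single_le_sum (fun j _ ↦ hA.eigenvalues_nonneg j) (Finset.mem_univ i)

theorem le_trace_smul_one [DecidableEq n] (hA : A.PosSemidef) :
    A ≤ A.trace • (1 : Matrix n n 𝕜) := by
  have trace_real : (RCLike.re A.trace : 𝕜) = A.trace :=
    RCLike.conj_eq_iff_re.mp hA.trace_nonneg.isSelfAdjoint
  have spectrum_le : ∀ x ∈ spectrum ℝ A, x ≤ RCLike.re A.trace := by
    rw [hA.isHermitian.spectrum_real_eq_range_eigenvalues]
    rintro _ ⟨i, rfl⟩
    exact eigenvalues_le_re_trace hA i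
  have h := le_algebraMap_of_spectrum_le spectrum_le hA.isHermitian
  rwa [Algebra.algebraMap_eq_smul_one, RCLike.real_smul_eq_coe_smul (K := 𝕜), trace_real] at h

theorem mul_mul_le_trace_mul_smul (hL : L.PosSemidef) (hS : S.PosSemidef) :
    S * L * S ≤ (L * S).trace • S := by
  classical
  obtain ⟨B, rfl⟩ := CStarAlgebra.nonneg_iff_eq_star_mul_self.mp hS.nonneg
  have trace_eq : (B * L * star B).trace = (L * (star B * B)).trace := by
    rw [mul_assoc, trace_mul_comm, mul_assoc]
  have h := star_left_conjugate_le_conjugate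
    (le_trace_smul_one (hL.mul_mul_conjTranspose_same B)) B
  rw [← star_eq_conjTranspose, trace_eq] at h
  simpa only [mul_assoc, smul_mul_assoc, mul_smul_comm, one_mul] using h

theorem le_trace_mul_smul_inv [DecidableEq n] (hL : L.PosSemidef) (hS : S.PosDef) :
    L ≤ (L * S).trace • S⁻¹ := by
  have hdet : IsUnit S.det := S.isUnit_iff_isUnit_det.mp hS.isUnit
  have h := hS.inv.isHermitian.isSelfAdjoint.conjugate_le_conjugate
    (mul_mul_le_trace_mul_smul hL hS.posSemidef)
  simpa only [mul_assoc, mul_smul_comm, smul_mul_assoc, nonsing_inv_mul_cancel_left _ _ hdet,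
    mul_nonsing_inv _ hdet, mul_one] using h

theorem quad_form_le_trace_mul_quad_form_general [DecidableEq n]
    (hL : L.PosSemidef) (hS : S.PosDef) (v : n → 𝕜) :
    star v ⬝ᵥ L *ᵥ v ≤ (L * S).trace * (star v ⬝ᵥ S⁻¹ *ᵥ v) := by
  have h := (le_iff.mp (le_trace_mul_smul_inv hL hS)).dotProduct_mulVec_nonneg v
  rwa [sub_mulVec, dotProduct_sub, sub_nonneg, smul_mulVec, dotProduct_smul, smul_eq_mul] at h

end Loewner

/-- For a symmetric positive semidefinite `Λ`, a symmetric positive definite `S`, and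
any vector `v`, one has `vᵀ Λ v ≤ trace(ΛS) · (vᵀ S⁻¹ v)`. -/
theorem quad_form_le_trace_mul_quad_form
    (d : ℕ) (hd : 1 ≤ d)
    (L S : Matrix (Fin d) (Fin d) ℝ)
    (hL : L.PosSemidef) (hS : S.PosDef) (v : Fin d → ℝ) :
    v ⬝ᵥ L.mulVec v ≤ (L * S).trace * (v ⬝ᵥ S⁻¹.mulVec v) := by
  simpa only [star_trivial] using quad_form_le_trace_mul_quad_form_general hL hS v
end
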